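/- Let G ↷ (X, μ) be an aperiodic pmp action of a countable group, let ξ be a collection of Borel subsets of X, and let F be a G-invariant sub-σ-algebra. Then rh_{G,μ}(ξ | F) = inf{ H_μ(α) : α a countable Borel partition with ξ ⊆ σ_G(α) ∨ F modulo μ-null sets }. -/

import Mathlib

open MeasureTheory Set Function
open scoped ENNReal symmDiff

/-- A set in a measurable space is *analytic* if it is the image of a Borel subset of a
standard Borel space under a Borel (measurable) map. -/
def IsAnalyticS {W : Type*} [MeasurableSpace W] (A : Set W) : Prop :=
  ∃ (Z : Type) (mZ : MeasurableSpace Z), @StandardBorelSpace Z mZ ∧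
    ∃ (B : Set Z) (f : Z → W), MeasurableSet[mZ] B ∧ @Measurable Z W mZ _ f ∧ f '' B = A

/-- The smallest `G`-invariant sub-σ-algebra containing the collection `ξ`. -/
def sigmaG (G : Type*) {X : Type*} [Group G] [MulAction G X] (ξ : Set (Set X)) :
    MeasurableSpace X :=
  MeasurableSpace.generateFrom {B | ∃ (g : G), ∃ A ∈ ξ, B = (fun x => g • x) ⁻¹' A}

/-- The σ-algebra of `G`-invariant measurable sets. -/
def invSigma (G X : Type*) [Group G] [MulAction G X] [MeasurableSpace X] :
    MeasurableSpace X :=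
  MeasurableSpace.generateFrom {A | MeasurableSet A ∧ ∀ g : G, (fun x => g • x) ⁻¹' A = A}

/-- Conditional Shannon entropy `H_μ(α | m)` of a countable partition `α` given a
sub-σ-algebra `m`, valued in `[0,∞]`. -/
noncomputable def condEnt {X : Type*} (m : MeasurableSpace X) [mX : MeasurableSpace X]
    (μ : Measure X) {ι : Type*} (α : ι → Set X) : ℝ≥0∞ :=
  ∫⁻ x, ∑' i, ENNReal.ofReal
    (Real.negMulLog ((μ[(α i).indicator (fun _ => (1 : ℝ)) | m]) x)) ∂μ

/-- Shannon entropy `H_μ(α)` of a countable partition. -/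
noncomputable def shEnt {X : Type*} [MeasurableSpace X] (μ : Measure X)
    {ι : Type*} (α : ι → Set X) : ℝ≥0∞ :=
  ∑' i, ENNReal.ofReal (Real.negMulLog (μ (α i)).toReal)

/-- `α` is a countable Borel partition of `X` (indexed by `ℕ`, cells may be empty). -/
def IsPartition {X : Type*} [MeasurableSpace X] (α : ℕ → Set X) : Prop :=
  (∀ i, MeasurableSet (α i)) ∧ Pairwise (Function.onFun Disjoint α) ∧ (⋃ i, α i) = univ

/-- Every set of `ξ` agrees with an `m`-measurable set modulo `μ`-null sets. -/
def SubsetMod {X : Type*} (m : MeasurableSpace X) [mX : MeasurableSpace X] (μ : Measure X)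
    (ξ : Set (Set X)) : Prop :=
  ∀ A ∈ ξ, ∃ B, MeasurableSet[m] B ∧ μ (A ∆ B) = 0

/-- Outer Rokhlin entropy `rh_{G,μ}(ξ | F)`. -/
noncomputable def outerRokhlin (G : Type*) {X : Type*} (ξ : Set (Set X))
    (F : MeasurableSpace X) [Group G] [MulAction G X] [mX : MeasurableSpace X]
    (μ : Measure X) : ℝ≥0∞ :=
  sInf { h | ∃ α : ℕ → Set X, IsPartition α ∧
      SubsetMod (sigmaG G (Set.range α) ⊔ F ⊔ invSigma G X) μ ξ ∧
      h = condEnt (F ⊔ invSigma G X) μ α }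

/-- Rokhlin entropy `rh_G(X, μ | F)`. -/
noncomputable def rokhlin (G : Type*) {X : Type*} (F : MeasurableSpace X) [Group G]
    [MulAction G X] [mX : MeasurableSpace X] (μ : Measure X) : ℝ≥0∞ :=
  outerRokhlin G {A | MeasurableSet A} F μ

/-- Outer Rokhlin entropy `rh_{G,μ}(S | F)` of a sub-σ-algebra `S`. -/
noncomputable def outerRokhlinAlg (G : Type*) {X : Type*} (S F : MeasurableSpace X) [Group G]
    [MulAction G X] [mX : MeasurableSpace X] (μ : Measure X) : ℝ≥0∞ :=
  outerRokhlin G {A | MeasurableSet[S] A} F μ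

/-- The action of `G` on `(X, μ)` is probability-measure-preserving. -/
def IsPmp (G : Type*) {X : Type*} [Group G] [MulAction G X] [MeasurableSpace X]
    (μ : Measure X) : Prop :=
  ∀ g : G, MeasurePreserving (fun x => g • x) μ μ

/-- Aperiodicity: μ-almost-every `G`-orbit is infinite. -/
def Aperiodic (G : Type*) {X : Type*} [Group G] [MulAction G X] [MeasurableSpace X]
    (μ : Measure X) : Prop :=
  ∀ᵐ x ∂μ, (MulAction.orbit G x).Infinite

/-- Ergodicity of a measure: every invariant Borel set is null or conull. -/
def IsErgodicInv (G : Type*) {X : Type*} [Group G] [MulAction G X] [MeasurableSpace X]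
    (ν : Measure X) : Prop :=
  ∀ A : Set X, MeasurableSet A → (∀ g : G, (fun x => g • x) ⁻¹' A = A) → ν A = 0 ∨ ν A = 1

/-- `F` is a `G`-invariant σ-algebra. -/
def InvariantAlg (G : Type*) {X : Type*} (F : MeasurableSpace X) [Group G] [MulAction G X] :
    Prop :=
  ∀ (g : G) (A : Set X), MeasurableSet[F] A → MeasurableSet[F] ((fun x => g • x) ⁻¹' A)

/-- `F` is countably generated. -/
def CountablyGen {X : Type*} (F : MeasurableSpace X) : Prop :=
  ∃ S : Set (Set X), S.Countable ∧ F = MeasurableSpace.generateFrom S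

/-- `π` is an ergodic decomposition map for `μ`. -/
def IsErgDecomp (G : Type*) {X : Type*} [Group G] [MulAction G X] [MeasurableSpace X]
    (μ : Measure X) (π : X → Measure X) : Prop :=
  Measurable π ∧
  (∀ x, IsProbabilityMeasure (π x) ∧ IsPmp G (π x) ∧ IsErgodicInv G (π x)) ∧
  (∀ (g : G) (x : X), π (g • x) = π x) ∧
  (∀ ν : Measure X, IsProbabilityMeasure ν → IsPmp G ν → IsErgodicInv G ν →
      ν {x | π x = ν} = 1) ∧
  (∀ B : Set X, MeasurableSet B → μ B = ∫⁻ x, π x B ∂μ)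

noncomputable def psi (q : ℝ≥0∞) : ℝ≥0∞ :=
  if q = 0 then ⊤ else ENNReal.ofReal (-Real.log q.toReal)

noncomputable def eneg (c : ℝ≥0∞) : ℝ≥0∞ :=
  if c = ⊤ then 0 else ENNReal.ofReal (Real.exp (-c.toReal))

lemma eneg_add (a b : ℝ≥0∞) : eneg (a + b) = eneg a * eneg b := by
  unfold eneg
  by_cases ha : a = ⊤
  · simp [ha]
  by_cases hb : b = ⊤
  · simp [hb]
  have hab : a + b ≠ ⊤ := ENNReal.add_ne_top.2 ⟨ha, hb⟩
  rw [if_neg ha, if_neg hb, if_neg hab, ← ENNReal.ofReal_mul (Real.exp_pos _).le, ← Real.exp_add,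
    ENNReal.toReal_add ha hb]
  congr 2
  ring

lemma eneg_zero : eneg 0 = 1 := by simp [eneg]

lemma eneg_top : eneg ⊤ = 0 := by simp [eneg]

lemma eneg_anti {a b : ℝ≥0∞} (h : a ≤ b) : eneg b ≤ eneg a := by
  unfold eneg
  by_cases hb : b = ⊤
  · simp [hb]
  have ha : a ≠ ⊤ := ne_top_of_le_ne_top hb h
  rw [if_neg ha, if_neg hb]
  apply ENNReal.ofReal_le_ofReal
  apply Real.exp_le_exp.2
  have := ENNReal.toReal_mono hb h
  linarith

lemma eneg_psi {q : ℝ≥0∞} (hq : q ≤ 1) : eneg (psi q) = q := by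
  unfold eneg psi
  by_cases h0 : q = 0
  · simp [h0]
  have hqt : q ≠ ⊤ := ne_top_of_le_ne_top ENNReal.one_ne_top hq
  have hpos : 0 < q.toReal := ENNReal.toReal_pos h0 hqt
  have hle : q.toReal ≤ 1 := by simpa using ENNReal.toReal_mono ENNReal.one_ne_top hq
  have hl : 0 ≤ -Real.log q.toReal := by
    have := Real.log_nonpos hpos.le hle
    linarith
  rw [if_neg h0, if_neg ENNReal.ofReal_ne_top, ENNReal.toReal_ofReal hl, neg_neg,
    Real.exp_log hpos, ENNReal.ofReal_toReal hqt]

lemma measurable_psi : Measurable psi := by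
  unfold psi
  refine Measurable.ite (measurableSet_singleton 0) measurable_const ?_
  exact ENNReal.measurable_ofReal.comp
    ((Real.measurable_log.comp ENNReal.measurable_toReal).neg)

lemma mul_psi {q : ℝ≥0∞} (hq : q ≤ 1) :
    q * psi q = ENNReal.ofReal (Real.negMulLog q.toReal) := by
  unfold psi Real.negMulLog
  by_cases h0 : q = 0
  · simp [h0]
  have hqt : q ≠ ⊤ := ne_top_of_le_ne_top ENNReal.one_ne_top hq
  rw [if_neg h0, neg_mul, ← mul_neg, ENNReal.ofReal_mul ENNReal.toReal_nonneg,
    ENNReal.ofReal_toReal hqt]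

lemma eneg_sum {ι : Type*} (T : Finset ι) (f : ι → ℝ≥0∞) :
    eneg (∑ i ∈ T, f i) = ∏ i ∈ T, eneg (f i) := by
  classical
  induction T using Finset.induction_on with
  | empty => simp [eneg_zero]
  | insert a s ha ih => rw [Finset.sum_insert ha, Finset.prod_insert ha, eneg_add, ih]

lemma kraft (v : ℕ → ℕ → ℝ≥0∞) (hv : ∀ k, ∑' i, eneg (v k i) ≤ 1) (T : Finset (ℕ →₀ ℕ)) :
    ∑ s ∈ T, eneg (∑' k, v k (s k)) ≤ 1 := by
  classical
  obtain ⟨N, hN⟩ : ∃ N, ∀ s ∈ T, ∀ k, N ≤ k → s k = 0 := by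
    refine ⟨(T.biUnion fun s => s.support).sup id + 1, fun s hs k hk => ?_⟩
    by_contra h
    have : k ∈ T.biUnion fun s => s.support :=
      Finset.mem_biUnion.2 ⟨s, hs, Finsupp.mem_support_iff.2 h⟩
    have := Finset.le_sup (f := id) this
    simp only [id] at this
    omega
  let R : (ℕ →₀ ℕ) → (Fin N → ℕ) := fun s k => s (k : ℕ)
  let W : (Fin N → ℕ) → ℝ≥0∞ := fun f => ∏ k : Fin N, eneg (v (k : ℕ) (f k))
  have h1 : ∑ s ∈ T, eneg (∑' k, v k (s k)) ≤ ∑ s ∈ T, W (R s) := by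
    refine Finset.sum_le_sum fun s _ => ?_
    change _ ≤ ∏ k : Fin N, eneg (v (k : ℕ) (s (k : ℕ)))
    rw [← eneg_sum]
    refine eneg_anti ?_
    rw [Fin.sum_univ_eq_sum_range (fun k => v k (s k)) N]
    exact ENNReal.sum_le_tsum _
  have hinj : Set.InjOn R T := by
    intro s hs s' hs' h
    ext k
    by_cases hk : k < N
    · exact congrFun h ⟨k, hk⟩
    · rw [hN s hs k (by omega), hN s' hs' k (by omega)]
  have h2 : ∑ s ∈ T, W (R s) = ∑ f ∈ T.image R, W f := (Finset.sum_image hinj).symm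
  have h3 : ∑ f ∈ T.image R, W f ≤
      ∑ f ∈ Fintype.piFinset (fun k : Fin N => T.image (fun s => R s k)), W f := by
    refine Finset.sum_le_sum_of_subset ?_
    intro f hf
    obtain ⟨s, hs, rfl⟩ := Finset.mem_image.1 hf
    exact Fintype.mem_piFinset.2 fun k => Finset.mem_image.2 ⟨s, hs, rfl⟩
  have h4 : ∑ f ∈ Fintype.piFinset (fun k : Fin N => T.image (fun s => R s k)), W f =
      ∏ k : Fin N, ∑ i ∈ T.image (fun s => R s k), eneg (v (k : ℕ) i) :=
    by rw [Finset.prod_univ_sum]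
  have h5 : ∏ k : Fin N, ∑ i ∈ T.image (fun s => R s k), eneg (v (k : ℕ) i) ≤ 1 := by
    refine Finset.prod_le_one' fun k _ => ?_
    exact (ENNReal.sum_le_tsum _).trans (hv k)
  exact h1.trans (h2.le.trans (h3.trans (h4.le.trans h5)))

open Classical in
noncomputable def rk {S : Type*} (code : S → ℕ) (c : S → ℝ≥0∞) (s : S) : ℝ≥0∞ :=
  ∑' s', if (c s' < c s ∨ (c s' = c s ∧ code s' ≤ code s)) then 1 else 0

lemma rk_spec {S : Type*} (code : S → ℕ) (c : S → ℝ≥0∞)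
    (hc : ∀ T : Finset S, ∑ s ∈ T, eneg (c s) ≤ 1) (s : S) (hs : c s ≠ ⊤) :
    ∃ n : ℕ, rk code c s = n ∧ 1 ≤ n ∧ ENNReal.ofReal (Real.log n) ≤ c s := by
  classical
  set A : Set S := {s' | c s' < c s ∨ (c s' = c s ∧ code s' ≤ code s)} with hA
  have hpos : 0 < Real.exp (-(c s).toReal) := Real.exp_pos _
  have hcard : ∀ T : Finset S, (T : Set S) ⊆ A → (T.card : ℝ) ≤ Real.exp (c s).toReal := by
    intro T hT
    have h1 : (T.card : ℝ≥0∞) * eneg (c s) ≤ 1 := by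
      calc (T.card : ℝ≥0∞) * eneg (c s) = ∑ s' ∈ T, eneg (c s) := by simp
        _ ≤ ∑ s' ∈ T, eneg (c s') := by
          refine Finset.sum_le_sum fun t ht => eneg_anti ?_
          rcases hT ht with h | h
          · exact h.le
          · exact h.1.le
        _ ≤ 1 := hc T
    have h2 := ENNReal.toReal_mono ENNReal.one_ne_top h1
    rw [ENNReal.toReal_mul, eneg, if_neg hs, ENNReal.toReal_ofReal hpos.le] at h2
    simp only [ENNReal.toReal_natCast, ENNReal.toReal_one] at h2
    rw [Real.exp_neg, ← div_eq_mul_inv, div_le_one (Real.exp_pos _)] at h2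
    exact h2
  have hfin : A.Finite := by
    by_contra hinf
    obtain ⟨n, hn⟩ := exists_nat_gt (Real.exp (c s).toReal)
    obtain ⟨T, hT, hTc⟩ := Set.Infinite.exists_subset_card_eq hinf n
    have := hcard T hT
    rw [hTc] at this
    linarith
  have hmem : s ∈ A := Or.inr ⟨rfl, le_rfl⟩
  refine ⟨hfin.toFinset.card, ?_, ?_, ?_⟩
  · unfold rk
    rw [tsum_eq_sum (s := hfin.toFinset)]
    · rw [Finset.sum_congr rfl (g := fun _ => 1)]
      · simp
      · intro x hx
        exact if_pos ((hfin.mem_toFinset).1 hx)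
    · intro x hx
      exact if_neg (fun h => hx ((hfin.mem_toFinset).2 h))
  · exact Finset.card_pos.2 ⟨s, hfin.mem_toFinset.2 hmem⟩
  · have h := hcard hfin.toFinset (by simp)
    have hc1 : 1 ≤ hfin.toFinset.card := Finset.card_pos.2 ⟨s, hfin.mem_toFinset.2 hmem⟩
    rw [ENNReal.ofReal_le_iff_le_toReal hs]
    rw [Real.log_le_iff_le_exp (by exact_mod_cast hc1)]
    exact h

lemma rk_lt {S : Type*} (code : S → ℕ) (hcode : Injective code) (c : S → ℝ≥0∞)
    (s s' : S) (hne : s ≠ s') (h : c s < c s' ∨ (c s = c s' ∧ code s ≤ code s')) :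
    rk code c s + 1 ≤ rk code c s' := by
  classical
  have h1 : (1 : ℝ≥0∞) = ∑' t, if t = s' then 1 else 0 := by rw [tsum_ite_eq]
  unfold rk
  rw [h1, ← ENNReal.tsum_add]
  refine ENNReal.tsum_le_tsum fun t => ?_
  by_cases ht : t = s'
  · subst ht
    have : ¬ (c t < c s ∨ (c t = c s ∧ code t ≤ code s)) := by
      rintro (h2 | h2)
      · rcases h with h | h
        · exact lt_asymm h h2
        · exact h2.ne h.1.symm
      · rcases h with h | h
        · exact h.ne h2.1.symm
        · exact hne (hcode (le_antisymm h.2 h2.2))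
    rw [if_neg this]
    simp
  · rw [if_neg ht, add_zero]
    split_ifs with h2 h3 h3
    · exact le_rfl
    · exfalso
      apply h3
      rcases h with h | h
      · rcases h2 with h2 | h2
        · exact Or.inl (h2.trans h)
        · exact Or.inl (h2.1.le.trans_lt h)
      · rcases h2 with h2 | h2
        · exact Or.inl (h2.trans_le h.1.le)
        · exact Or.inr ⟨h2.1.trans h.1, h2.2.trans h.2⟩
    · simp
    · exact le_rfl

lemma rk_inj {S : Type*} (code : S → ℕ) (hcode : Injective code) (c : S → ℝ≥0∞)
    (hc : ∀ T : Finset S, ∑ s ∈ T, eneg (c s) ≤ 1) (s s' : S) (hs : c s ≠ ⊤) (hs' : c s' ≠ ⊤)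
    (h : rk code c s = rk code c s') : s = s' := by
  by_contra hne
  obtain ⟨n, hn, -⟩ := rk_spec code c hc s hs
  obtain ⟨n', hn', -⟩ := rk_spec code c hc s' hs'
  have key : (c s < c s' ∨ (c s = c s' ∧ code s ≤ code s')) ∨
      (c s' < c s ∨ (c s' = c s ∧ code s' ≤ code s)) := by
    rcases lt_trichotomy (c s) (c s') with h1 | h1 | h1
    · exact Or.inl (Or.inl h1)
    · rcases le_total (code s) (code s') with h2 | h2
      · exact Or.inl (Or.inr ⟨h1, h2⟩)
      · exact Or.inr (Or.inr ⟨h1.symm, h2⟩)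
    · exact Or.inr (Or.inl h1)
  rcases key with k | k
  · have := rk_lt code hcode c s s' hne k
    rw [← h, hn] at this
    norm_cast at this
    omega
  · have := rk_lt code hcode c s' s (Ne.symm hne) k
    rw [h, hn'] at this
    norm_cast at this
    omega

lemma measurable_rk {X S : Type*} [MeasurableSpace X] [Countable S] (code : S → ℕ)
    (c : X → S → ℝ≥0∞) (hc : ∀ s, Measurable fun x => c x s) (s : S) :
    Measurable fun x => rk code (c x) s := by
  classical
  unfold rk
  refine Measurable.tsum fun s' => ?_
  refine Measurable.ite ?_ measurable_const measurable_const
  refine (measurableSet_lt (hc s') (hc s)).union ?_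
  exact (measurableSet_eq_fun (hc s') (hc s)).inter (MeasurableSet.const _)

/-- points whose orbit meets `S` infinitely often -/
def infHit (G : Type*) {X : Type*} [Group G] [MulAction G X] (S : Set X) : Set X :=
  {x | (MulAction.orbit G x ∩ S).Infinite}

lemma infHit_smul {G X : Type*} [Group G] [MulAction G X] (S : Set X) (g : G) (x : X) :
    g • x ∈ infHit G S ↔ x ∈ infHit G S := by
  unfold infHit
  simp only [mem_ofPred_eq]
  rw [MulAction.orbit_smul]

lemma infHit_iff {G X : Type*} [Group G] [MulAction G X] (u : ℕ → G)
    (hu : Surjective u) (S : Set X) (x : X) :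
    x ∈ infHit G S ↔ ∀ T : Finset ℕ, ∃ k, u k • x ∈ S ∧ ∀ j ∈ T, u k • x ≠ u j • x := by
  constructor
  · intro h T
    have hf : ((fun j => u j • x) '' (T : Set ℕ)).Finite := T.finite_toSet.image _
    obtain ⟨y, hy, hyT⟩ := h.exists_notMem_finite hf
    obtain ⟨⟨g, rfl⟩, hyS⟩ := hy
    obtain ⟨k, rfl⟩ := hu g
    exact ⟨k, hyS, fun j hj he => hyT ⟨j, hj, he.symm⟩⟩
  · intro h hfin
    classical
    have : ∀ y : X, ∃ j, y ∈ MulAction.orbit G x ∩ S → u j • x = y := by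
      intro y
      by_cases hy : y ∈ MulAction.orbit G x ∩ S
      · obtain ⟨⟨g, hg⟩, -⟩ := hy
        obtain ⟨k, rfl⟩ := hu g
        exact ⟨k, fun _ => hg⟩
      · exact ⟨0, fun h => absurd h hy⟩
    choose J hJ using this
    obtain ⟨k, hk, hkT⟩ := h (hfin.toFinset.image J)
    have hm : u k • x ∈ MulAction.orbit G x ∩ S := ⟨⟨u k, rfl⟩, hk⟩
    exact hkT (J (u k • x)) (Finset.mem_image_of_mem _ (hfin.mem_toFinset.2 hm)) (hJ _ hm).symm

lemma measurableSet_infHit {G X : Type*} [Group G] [Countable G]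
    [MeasurableSpace X] [StandardBorelSpace X] [MulAction G X]
    (hm : ∀ g : G, Measurable fun x : X => g • x) {S : Set X} (hS : MeasurableSet S) :
    MeasurableSet (infHit G S) := by
  obtain ⟨u, hu⟩ := exists_surjective_nat G
  have : infHit G S = ⋂ T : Finset ℕ, ⋃ k, ((fun x => u k • x) ⁻¹' S ∩
      ⋂ j ∈ T, {x | u k • x = u j • x}ᶜ) := by
    ext x
    rw [infHit_iff u hu]
    simp
  rw [this]
  refine MeasurableSet.iInter fun T => MeasurableSet.iUnion fun k => ?_
  refine (hm _ hS).inter ?_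
  refine Finset.measurableSet_biInter _ fun j _ => ?_
  exact (measurableSet_eq_fun (hm _) (hm _)).compl

/-- A set meeting every orbit at most once is null for an aperiodic pmp action. -/
lemma partial_transversal_null {G X : Type*} [Group G] [Countable G]
    [MeasurableSpace X] [StandardBorelSpace X] [MulAction G X]
    (μ : Measure X) [IsProbabilityMeasure μ] (hpmp : IsPmp G μ) (hap : Aperiodic G μ)
    (T : Set X) (hT : MeasurableSet T) (h : ∀ x ∈ T, ∀ g : G, g • x ∈ T → g • x = x) :
    μ T = 0 := by
  obtain ⟨u, hu⟩ := exists_surjective_nat G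
  have hm : ∀ g : G, Measurable fun x : X => g • x := fun g => (hpmp g).measurable
  set Tk : ℕ → Set X := fun k => T ∩ ⋂ j ∈ Finset.range k, {x | u k • x = u j • x}ᶜ with hTk
  have hTkm : ∀ k, MeasurableSet (Tk k) := fun k => hT.inter
    (Finset.measurableSet_biInter _ fun j _ => (measurableSet_eq_fun (hm _) (hm _)).compl)
  set Uk : ℕ → Set X := fun k => (fun x => (u k)⁻¹ • x) ⁻¹' (Tk k) with hUk
  have hUm : ∀ k, MeasurableSet (Uk k) := fun k => hm _ (hTkm k)
  have hμ : ∀ k, μ (Uk k) = μ (Tk k) := fun k =>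
    (hpmp (u k)⁻¹).measure_preimage (hTkm k).nullMeasurableSet
  have hdisj : Pairwise (Function.onFun Disjoint Uk) := by
    have key : ∀ k l, k < l → Disjoint (Uk k) (Uk l) := by
      intro k l hkl
      rw [Set.disjoint_left]
      rintro x ⟨hx1, hx2⟩ ⟨hy1, hy2⟩
      simp only [mem_iInter, mem_compl_iff, mem_ofPred_eq, Finset.mem_range] at hx2 hy2
      have e : (u l)⁻¹ • x = ((u l)⁻¹ * u k) • ((u k)⁻¹ • x) := by
        rw [smul_smul]; simp
      have e2 : (u l)⁻¹ • x = (u k)⁻¹ • x := by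
        have := h _ hx1 ((u l)⁻¹ * u k) (by rw [← e]; exact hy1)
        rw [← e] at this
        exact this
      apply hy2 k hkl
      rw [smul_inv_smul, e2, smul_inv_smul]
    intro k l hkl
    rcases lt_or_gt_of_ne hkl with h1 | h1
    · exact key k l h1
    · exact (key l k h1).symm
  have hsum : ∑' k, μ (Tk k) ≠ ⊤ := by
    rw [← tsum_congr hμ, ← measure_iUnion hdisj hUm]
    exact measure_ne_top _ _
  have hbc := ae_eventually_notMem hsum
  rw [measure_eq_zero_iff_ae_notMem]
  filter_upwards [hbc, hap] with x hx hinf hxT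
  rw [Filter.eventually_atTop] at hx
  obtain ⟨N, hN⟩ := hx
  -- every orbit point is among first N
  have hall : ∀ k, ∃ j < N, u k • x = u j • x := by
    intro k
    induction k using Nat.strong_induction_on with
    | _ k ih =>
      by_cases hk : k < N
      · exact ⟨k, hk, rfl⟩
      · have hnot := hN k (by omega)
        by_contra hcon
        push Not at hcon
        apply hnot
        refine ⟨hxT, ?_⟩
        simp only [mem_iInter, mem_compl_iff, mem_ofPred_eq, Finset.mem_range]
        intro j hj he
        obtain ⟨i, hi, hie⟩ := ih j hj
        exact hcon i hi (he.trans hie)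
  apply hinf
  refine ((Finset.range N).finite_toSet.image (fun j => u j • x)).subset ?_
  rintro y ⟨g, rfl⟩
  obtain ⟨k, rfl⟩ := hu g
  obtain ⟨j, hj, he⟩ := hall k
  exact ⟨j, by simpa using hj, he.symm⟩

open Classical in
/-- vanishing markers -/
def markerSeq (G : Type*) {X : Type*} [Group G] [MulAction G X] (S : ℕ → Set X) : ℕ → Set X
  | 0 => univ
  | n + 1 => (markerSeq G S n ∩ S n ∩ infHit G (markerSeq G S n ∩ S n)) ∪
      ((markerSeq G S n ∩ (S n)ᶜ) ∩ (infHit G (markerSeq G S n ∩ S n))ᶜ)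

lemma exists_marker {G X : Type*} [Group G] [Countable G]
    [MeasurableSpace X] [StandardBorelSpace X] [MulAction G X]
    (μ : Measure X) [IsProbabilityMeasure μ] (hpmp : IsPmp G μ) (hap : Aperiodic G μ)
    (ε : ℝ≥0∞) (hε : ε ≠ 0) :
    ∃ M : Set X, MeasurableSet M ∧ μ M ≤ ε ∧ ∀ᵐ x ∂μ, ∃ g : G, g • x ∈ M := by
  have hm : ∀ g : G, Measurable fun x : X => g • x := fun g => (hpmp g).measurable
  obtain ⟨f, hf, hfi⟩ := MeasurableSpace.measurable_injection_nat_bool_of_countablySeparated X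
  set S : ℕ → Set X := fun n => {x | f x n = true} with hS
  have hSm : ∀ n, MeasurableSet (S n) := fun n =>
    ((measurable_pi_apply n).comp hf) (measurableSet_singleton true)
  set A := markerSeq G S with hA
  have hAs : ∀ n, A (n + 1) = (A n ∩ S n ∩ infHit G (A n ∩ S n)) ∪
      ((A n ∩ (S n)ᶜ) ∩ (infHit G (A n ∩ S n))ᶜ) := fun n => rfl
  have hAm : ∀ n, MeasurableSet (A n) := by
    intro n
    induction n with
    | zero => exact MeasurableSet.univ
    | succ n ih =>
      rw [hAs]
      have h1 := measurableSet_infHit (G := G) hm (ih.inter (hSm n))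
      exact ((ih.inter (hSm n)).inter h1).union ((ih.inter (hSm n).compl).inter h1.compl)
  have hanti : Antitone A := by
    refine antitone_nat_of_succ_le fun n => ?_
    rw [hAs]
    rintro x (hx | hx)
    · exact hx.1.1
    · exact hx.1.1
  have hinf : ∀ x : X, (MulAction.orbit G x).Infinite → ∀ n, x ∈ infHit G (A n) := by
    intro x hx n
    induction n with
    | zero => simpa [infHit, hA, markerSeq] using hx
    | succ n ih =>
      by_cases hD : x ∈ infHit G (A n ∩ S n)
      · refine Set.Infinite.mono ?_ hD
        rintro y ⟨⟨g, rfl⟩, hy⟩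
        refine ⟨⟨g, rfl⟩, ?_⟩
        rw [hAs]
        exact Or.inl ⟨hy, (infHit_smul _ g x).2 hD⟩
      · have hfin : (MulAction.orbit G x ∩ (A n ∩ S n)).Finite := Set.not_infinite.1 hD
        have h2 : ((MulAction.orbit G x ∩ A n) \ (MulAction.orbit G x ∩ (A n ∩ S n))).Infinite :=
          Set.Infinite.sdiff ih hfin
        refine Set.Infinite.mono ?_ h2
        rintro y ⟨⟨⟨g, rfl⟩, hy⟩, hy2⟩
        refine ⟨⟨g, rfl⟩, ?_⟩
        rw [hAs]
        refine Or.inr ⟨⟨hy, fun hs => hy2 ⟨⟨g, rfl⟩, hy, hs⟩⟩, fun h => hD ((infHit_smul _ g x).1 h)⟩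
  have hnull : μ (⋂ n, A n) = 0 := by
    refine partial_transversal_null μ hpmp hap _ (MeasurableSet.iInter hAm) ?_
    intro x hx g hgx
    rw [mem_iInter] at hx hgx
    apply hfi
    funext n
    have h1 := hx (n + 1)
    have h2 := hgx (n + 1)
    rw [hAs] at h1 h2
    have e := infHit_smul (G := G) (A n ∩ S n) g x
    have : f (g • x) n = true ↔ f x n = true := by
      change g • x ∈ S n ↔ x ∈ S n
      rcases h1 with h1 | h1 <;> rcases h2 with h2 | h2
      · exact ⟨fun _ => h1.1.2, fun _ => h2.1.2⟩
      · exact absurd (e.2 h1.2) h2.2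
      · exact absurd (e.1 h2.2) h1.2
      · exact ⟨fun h => absurd h h2.1.2, fun h => absurd h h1.1.2⟩
    exact Bool.eq_iff_iff.2 this
  have htend := tendsto_measure_iInter_atTop (μ := μ) (s := A)
    (fun n => (hAm n).nullMeasurableSet) hanti ⟨0, measure_ne_top _ _⟩
  rw [hnull] at htend
  obtain ⟨n, hn⟩ := (htend.eventually (ge_mem_nhds (pos_iff_ne_zero.2 hε))).exists
  refine ⟨A n, hAm n, hn, ?_⟩
  filter_upwards [hap] with x hx
  obtain ⟨y, ⟨g, rfl⟩, hy⟩ := (hinf x hx n).nonempty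
  exact ⟨g, hy⟩

lemma gibbs_pt {p w : ℝ} (hp : 0 ≤ p) (hw : 0 < w) (hw1 : w ≤ 1) (hp1 : p ≤ 1) :
    ENNReal.ofReal (Real.negMulLog p) + ENNReal.ofReal p ≤
      ENNReal.ofReal p * ENNReal.ofReal (-Real.log w) + ENNReal.ofReal w := by
  have hl : 0 ≤ -Real.log w := by
    have := Real.log_nonpos hw.le hw1
    linarith
  rw [← ENNReal.ofReal_mul hp, ← ENNReal.ofReal_add (Real.negMulLog_nonneg hp hp1) hp,
    ← ENNReal.ofReal_add (mul_nonneg hp hl) hw.le]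
  apply ENNReal.ofReal_le_ofReal
  rcases hp.eq_or_lt with rfl | hp0
  · simp [hw.le]
  · have h1 : Real.log (w / p) ≤ w / p - 1 := Real.log_le_sub_one_of_pos (div_pos hw hp0)
    rw [Real.log_div hw.ne' hp0.ne'] at h1
    have h2 : p * (Real.log w - Real.log p) ≤ p * (w / p - 1) := mul_le_mul_of_nonneg_left h1 hp
    have h3 : p * (w / p - 1) = w - p := by field_simp
    rw [h3] at h2
    unfold Real.negMulLog
    nlinarith

lemma shEnt_le {X : Type*} [MeasurableSpace X] (μ : Measure X) [IsProbabilityMeasure μ]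
    (b : X → ℕ) (hb : Measurable b) (w : ℕ → ℝ) (hw : ∀ n, 0 < w n) (hw1 : ∀ n, w n ≤ 1)
    (hs : ∑' n, ENNReal.ofReal (w n) ≤ 1) :
    shEnt μ (fun n => b ⁻¹' {n}) ≤ ∫⁻ x, ENNReal.ofReal (-Real.log (w (b x))) ∂μ := by
  have hmass : ∑' n, μ (b ⁻¹' {n}) = 1 := by
    rw [← measure_iUnion]
    · have : (⋃ i, b ⁻¹' {i}) = univ := by ext x; simp
      rw [this, measure_univ]
    · intro i j hij
      exact Disjoint.preimage _ (by simpa using hij)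
    · exact fun n => hb (measurableSet_singleton n)
  have hInt : ∫⁻ x, ENNReal.ofReal (-Real.log (w (b x))) ∂μ =
      ∑' n, μ (b ⁻¹' {n}) * ENNReal.ofReal (-Real.log (w n)) := by
    have := lintegral_map (μ := μ) (f := fun n : ℕ => ENNReal.ofReal (-Real.log (w n)))
      (measurable_from_nat) hb
    rw [← this, lintegral_countable']
    refine tsum_congr fun n => ?_
    rw [Measure.map_apply hb (measurableSet_singleton n), mul_comm]
  rw [hInt]
  have key : shEnt μ (fun n => b ⁻¹' {n}) + 1 ≤
      (∑' n, μ (b ⁻¹' {n}) * ENNReal.ofReal (-Real.log (w n))) + 1 := by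
    calc shEnt μ (fun n => b ⁻¹' {n}) + 1
        = ∑' n, (ENNReal.ofReal (Real.negMulLog (μ (b ⁻¹' {n})).toReal) + μ (b ⁻¹' {n})) := by
          rw [ENNReal.tsum_add, hmass]; rfl
      _ ≤ ∑' n, (μ (b ⁻¹' {n}) * ENNReal.ofReal (-Real.log (w n)) + ENNReal.ofReal (w n)) := by
          refine ENNReal.tsum_le_tsum fun n => ?_
          have := gibbs_pt (p := (μ (b ⁻¹' {n})).toReal) ENNReal.toReal_nonneg (hw n) (hw1 n)
            (by simpa using ENNReal.toReal_mono ENNReal.one_ne_top (prob_le_one (μ := μ)))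
          rwa [ENNReal.ofReal_toReal (measure_ne_top _ _)] at this
      _ ≤ _ := by
          rw [ENNReal.tsum_add]
          gcongr
  exact (ENNReal.add_le_add_iff_right ENNReal.one_ne_top).1 key

lemma condEnt_le_shEnt {X : Type*} (m : MeasurableSpace X) [mX : MeasurableSpace X] (hm : m ≤ mX)
    (μ : Measure X) [IsProbabilityMeasure μ] (α : ℕ → Set X) (hα : ∀ i, MeasurableSet (α i)) :
    condEnt m μ α ≤ shEnt μ α := by
  unfold condEnt shEnt
  have hmeas : ∀ i, Measurable (μ[(α i).indicator (fun _ => (1 : ℝ)) | m]) := fun i =>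
    stronglyMeasurable_condExp.measurable.mono hm le_rfl
  have hmn : ∀ i, AEMeasurable (fun x => ENNReal.ofReal (Real.negMulLog
      (μ[(α i).indicator (fun _ => (1 : ℝ)) | m] x))) μ := fun i =>
    ((Real.continuous_negMulLog.measurable.comp (hmeas i)).ennreal_ofReal).aemeasurable
  rw [lintegral_tsum hmn]
  refine ENNReal.tsum_le_tsum fun i => ?_
  set f := μ[(α i).indicator (fun _ => (1 : ℝ)) | m] with hf
  have hi : Integrable ((α i).indicator (fun _ => (1 : ℝ))) μ :=
    (integrable_const 1).indicator (hα i)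
  have h0 : 0 ≤ᵐ[μ] f := condExp_nonneg (Filter.Eventually.of_forall fun x =>
    indicator_nonneg (fun _ _ => zero_le_one) x)
  have h1 : f ≤ᵐ[μ] fun _ => 1 := by
    have := condExp_mono (m := m) hi (integrable_const (1 : ℝ)) (Filter.Eventually.of_forall
      fun x => indicator_le_self' (fun _ _ => zero_le_one) x)
    rwa [condExp_const hm] at this
  have hInt : ∫⁻ x, ENNReal.ofReal (f x) ∂μ = μ (α i) := by
    rw [← ofReal_integral_eq_lintegral_ofReal integrable_condExp h0, integral_condExp hm,
      integral_indicator (hα i)]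
    simp
  by_cases hp : μ (α i) = 0
  · have hz : ∀ᵐ x ∂μ, ENNReal.ofReal (f x) = 0 := by
      rw [hp] at hInt
      exact (lintegral_eq_zero_iff (hmeas i).ennreal_ofReal).1 hInt
    refine le_of_eq_of_le ?_ zero_le
    rw [lintegral_eq_zero_iff' (hmn i)]
    filter_upwards [hz, h0] with x hx hx0
    have : f x = 0 := le_antisymm (ENNReal.ofReal_eq_zero.1 hx) hx0
    change ENNReal.ofReal (Real.negMulLog (f x)) = 0
    simp [this]
  have hppos : 0 < (μ (α i)).toReal := ENNReal.toReal_pos hp (measure_ne_top _ _)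
  have hple : (μ (α i)).toReal ≤ 1 := by
    simpa using ENNReal.toReal_mono ENNReal.one_ne_top (prob_le_one (μ := μ) (s := α i))
  set p := (μ (α i)).toReal with hpdef
  have hpe : ENNReal.ofReal p = μ (α i) := ENNReal.ofReal_toReal (measure_ne_top _ _)
  have key : ∫⁻ x, ENNReal.ofReal (Real.negMulLog (f x)) ∂μ + μ (α i) ≤
      ENNReal.ofReal (Real.negMulLog p) + μ (α i) := by
    calc ∫⁻ x, ENNReal.ofReal (Real.negMulLog (f x)) ∂μ + μ (α i)
        = ∫⁻ x, (ENNReal.ofReal (Real.negMulLog (f x)) + ENNReal.ofReal (f x)) ∂μ := by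
          rw [lintegral_add_right _ (hmeas i).ennreal_ofReal, hInt]
      _ ≤ ∫⁻ x, (ENNReal.ofReal (f x) * ENNReal.ofReal (-Real.log p) + ENNReal.ofReal p) ∂μ := by
          refine lintegral_mono_ae ?_
          filter_upwards [h0, h1] with x hx0 hx1
          exact gibbs_pt hx0 hppos hple hx1
      _ = μ (α i) * ENNReal.ofReal (-Real.log p) + ENNReal.ofReal p := by
          rw [lintegral_add_right _ measurable_const, lintegral_mul_const _
            (hmeas i).ennreal_ofReal, hInt]
          simp
      _ = _ := by
          rw [← hpe, ← ENNReal.ofReal_mul hppos.le]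
          simp [Real.negMulLog]
  exact (ENNReal.add_le_add_iff_right (measure_ne_top _ _)).1 key

lemma exists_weights (ε η : ℝ) (hε : 0 < ε) (hη : 0 < η) :
    ∃ (w : ℕ → ℝ) (C : ℝ), 0 ≤ C ∧ (∀ n, 0 < w n) ∧ (∀ n, w n ≤ 1) ∧
      ∑' n, ENNReal.ofReal (w n) ≤ 1 ∧ -Real.log (w 0) ≤ ε ∧
      ∀ k, 1 ≤ k → -Real.log (w k) ≤ (1 + η) * Real.log k + C := by
  set r : ℕ → ℝ := fun k => 1 / ((k + 1 : ℕ) : ℝ) ^ (1 + η) with hr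
  have hsum : Summable r :=
    (summable_nat_add_iff 1).2 (Real.summable_one_div_nat_rpow.2 (by linarith : 1 < 1 + η))
  have hrpos : ∀ k, 0 < r k := fun k => by
    have : (0 : ℝ) < ((k + 1 : ℕ) : ℝ) := by positivity
    positivity
  set Z := ∑' k, r k with hZ
  have hZpos : 0 < Z := hsum.tsum_pos (fun k => (hrpos k).le) 0 (hrpos 0)
  have hZle : ∀ k, r k ≤ Z := fun k => hsum.le_tsum k (fun j _ => (hrpos j).le)
  set d : ℝ := 1 - Real.exp (-ε) with hd
  have hdpos : 0 < d := by
    have : Real.exp (-ε) < 1 := by rw [Real.exp_lt_one_iff]; linarith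
    linarith
  have hdlt : d < 1 := by have := Real.exp_pos (-ε); linarith
  let w : ℕ → ℝ := fun n => Nat.casesOn n (1 - d) (fun k => d / Z * r k)
  have hw0 : w 0 = 1 - d := rfl
  have hwS : ∀ k, w (k + 1) = d / Z * r k := fun k => rfl
  have hdZ : 0 < d / Z := div_pos hdpos hZpos
  refine ⟨w, |Real.log (d / Z)|, abs_nonneg _, ?_, ?_, ?_, ?_, ?_⟩
  · rintro (_ | k)
    · rw [hw0]; linarith
    · rw [hwS]; exact mul_pos hdZ (hrpos k)
  · rintro (_ | k)
    · rw [hw0]; linarith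
    · rw [hwS]
      calc d / Z * r k ≤ d / Z * Z := mul_le_mul_of_nonneg_left (hZle k) hdZ.le
        _ = d := by field_simp
        _ ≤ 1 := hdlt.le
  · rw [tsum_eq_zero_add' ENNReal.summable, hw0]
    have : ∑' k, ENNReal.ofReal (w (k + 1)) = ENNReal.ofReal d := by
      rw [← ENNReal.ofReal_tsum_of_nonneg]
      · congr 1
        simp only [hwS]
        rw [tsum_mul_left, ← hZ]
        field_simp
      · intro k; rw [hwS]; exact (mul_pos hdZ (hrpos k)).le
      · simp only [hwS]; exact hsum.mul_left _
    rw [this, ← ENNReal.ofReal_add (by linarith) hdpos.le]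
    simp
  · rw [hw0, hd]; simp
  · rintro (_ | k) hk
    · omega
    · rw [hwS, Real.log_mul hdZ.ne' (hrpos k).ne', hr]
      have hkp : (0 : ℝ) < ((k + 1 : ℕ) : ℝ) := by positivity
      simp only [one_div]
      rw [Real.log_inv, Real.log_rpow hkp]
      have := neg_abs_le (Real.log (d / Z))
      linarith

lemma measurable_tsum_of {X : Type*} {m : MeasurableSpace X} {p : ℕ → X → ℝ≥0∞}
    (hp : ∀ i, Measurable[m] (p i)) : Measurable[m] fun x => ∑' i, p i x :=
  Measurable.tsum hp

lemma indicator_one_congr {X : Type*} {mX : MeasurableSpace X} {μ : Measure X} {A B : Set X}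
    (h : A =ᵐ[μ] B) :
    A.indicator (fun _ => (1 : ℝ)) =ᵐ[μ] B.indicator (fun _ => (1 : ℝ)) :=
  indicator_ae_eq_of_ae_eq_set h

lemma setLIntegral_eq_condExp_mul {X : Type*} (m : MeasurableSpace X) [mX : MeasurableSpace X]
    (hm : m ≤ mX) (μ : Measure X) [IsProbabilityMeasure μ] (A : Set X) (hA : MeasurableSet A)
    (φ : X → ℝ≥0∞) (hφ : Measurable[m] φ) :
    ∫⁻ x in A, φ x ∂μ =
      ∫⁻ x, ENNReal.ofReal (μ[A.indicator (fun _ => (1 : ℝ)) | m] x) * φ x ∂μ := by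
  set f := μ[A.indicator (fun _ => (1 : ℝ)) | m] with hf
  have hfm : Measurable f := stronglyMeasurable_condExp.measurable.mono hm le_rfl
  have hi : Integrable (A.indicator (fun _ => (1 : ℝ))) μ :=
    (integrable_const 1).indicator hA
  have h0 : 0 ≤ᵐ[μ] f := condExp_nonneg (Filter.Eventually.of_forall fun x =>
    indicator_nonneg (fun _ _ => zero_le_one) x)
  have hmeq : (μ.restrict A).trim hm = (μ.withDensity fun x => ENNReal.ofReal (f x)).trim hm := by
    refine @Measure.ext _ m _ _ fun S hS => ?_
    rw [trim_measurableSet_eq hm hS, trim_measurableSet_eq hm hS, Measure.restrict_apply (hm _ hS),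
      withDensity_apply _ (hm _ hS),
      ← ofReal_integral_eq_lintegral_ofReal integrable_condExp.integrableOn
        (ae_restrict_of_ae h0), setIntegral_condExp hm hi hS, setIntegral_indicator hA]
    simp
  rw [← lintegral_trim hm hφ, hmeq, lintegral_trim hm hφ,
    lintegral_withDensity_eq_lintegral_mul _ hfm.ennreal_ofReal (hφ.mono hm le_rfl)]
  rfl

lemma exists_q {X : Type*} (m : MeasurableSpace X) [mX : MeasurableSpace X]
    (hm : m ≤ mX) (μ : Measure X) [IsProbabilityMeasure μ] (a : X → ℕ) (ha : Measurable a) :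
    ∃ q : ℕ → X → ℝ≥0∞, (∀ i, Measurable[m] (q i)) ∧ (∀ x, ∑' i, q i x ≤ 1) ∧
      ∫⁻ x, psi (q (a x) x) ∂μ ≤ condEnt m μ (fun i => a ⁻¹' {i}) := by
  classical
  set α : ℕ → Set X := fun i => a ⁻¹' {i} with hα
  have hαm : ∀ i, MeasurableSet (α i) := fun i => ha (measurableSet_singleton i)
  set f : ℕ → X → ℝ := fun i => μ[(α i).indicator (fun _ => (1 : ℝ)) | m] with hf
  have hfm : ∀ i, Measurable[m] (f i) := fun i => stronglyMeasurable_condExp.measurable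
  have hi : ∀ i, Integrable ((α i).indicator (fun _ => (1 : ℝ))) μ := fun i =>
    (integrable_const 1).indicator (hαm i)
  have h0 : ∀ i, 0 ≤ᵐ[μ] f i := fun i => condExp_nonneg (Filter.Eventually.of_forall fun x =>
    indicator_nonneg (fun _ _ => zero_le_one) x)
  set p : ℕ → X → ℝ≥0∞ := fun i x => ENNReal.ofReal (f i x) with hp
  have hpm : ∀ i, Measurable[m] (p i) := fun i =>
    (ENNReal.measurable_ofReal).comp (hfm i)
  have hsm : Measurable[m] fun x => ∑' i, p i x :=
    measurable_tsum_of (m := m) hpm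
  have hle : ∀ᵐ x ∂μ, ∑' i, p i x ≤ 1 := by
    have hn : ∀ n, ∀ᵐ x ∂μ, ∑ i ∈ Finset.range n, f i x ≤ 1 := by
      intro n
      have e1 := condExp_finsetSum (μ := μ) (s := Finset.range n)
        (f := fun i => (α i).indicator (fun _ => (1 : ℝ))) (fun i _ => hi i) m
      have e2 := condExp_mono (μ := μ) (m := m)
        (f := ∑ i ∈ Finset.range n, (α i).indicator (fun _ => (1 : ℝ)))
        (integrable_finsetSum' (Finset.range n) (fun i _ => hi i))
        (integrable_const (1 : ℝ)) (Filter.Eventually.of_forall fun x => by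
          simp only [Finset.sum_apply]
          have : ∀ i, (α i).indicator (fun _ => (1 : ℝ)) x = if a x = i then 1 else 0 := by
            intro i
            simp [indicator, hα]
          simp only [this]
          rw [Finset.sum_ite_eq]
          split_ifs <;> norm_num)
      rw [condExp_const hm] at e2
      filter_upwards [e1, e2] with x h1 h2
      rw [h1] at h2
      simpa [hf] using h2
    filter_upwards [ae_all_iff.2 hn, ae_all_iff.2 h0] with x hx hx0
    rw [ENNReal.tsum_eq_iSup_nat]
    refine iSup_le fun n => ?_
    rw [← ENNReal.ofReal_sum_of_nonneg (fun i _ => hx0 i)]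
    simpa using ENNReal.ofReal_le_ofReal (hx n)
  refine ⟨fun i x => if ∑' j, p j x ≤ 1 then p i x else 0, fun i => ?_, fun x => ?_, ?_⟩
  · exact Measurable.ite (hsm measurableSet_Iic) (hpm i) measurable_const
  · by_cases h : ∑' j, p j x ≤ 1
    · simpa only [if_pos h] using h
    · simp only [if_neg h]; simp
  · have h1 : ∫⁻ x, psi (if ∑' j, p j x ≤ 1 then p (a x) x else 0) ∂μ =
        ∫⁻ x, psi (p (a x) x) ∂μ := by
      refine lintegral_congr_ae ?_
      filter_upwards [hle] with x hx
      rw [if_pos hx]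
    have hpsi : ∀ i, Measurable[m] fun x => psi (p i x) := fun i => measurable_psi.comp (hpm i)
    have hU : (⋃ i, α i) = univ := by ext x; simp [hα]
    have hd : Pairwise (Function.onFun Disjoint α) := by
      intro i j hij
      exact Disjoint.preimage _ (by simpa using hij)
    have h2 : ∫⁻ x, psi (p (a x) x) ∂μ = ∑' i, ∫⁻ x in α i, psi (p i x) ∂μ := by
      rw [← setLIntegral_univ, ← hU, lintegral_iUnion hαm hd]
      refine tsum_congr fun i => ?_
      refine setLIntegral_congr_fun (hαm i) fun x hx => ?_
      have : a x = i := hx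
      simp only [this]
    rw [h1, h2]
    unfold condEnt
    have hmn : ∀ i, AEMeasurable (fun x => ENNReal.ofReal (Real.negMulLog (f i x))) μ := fun i =>
      ((Real.continuous_negMulLog.measurable.comp
        ((hfm i).mono hm le_rfl)).ennreal_ofReal).aemeasurable
    rw [lintegral_tsum hmn]
    refine ENNReal.tsum_le_tsum fun i => ?_
    rw [setLIntegral_eq_condExp_mul m hm μ (α i) (hαm i) _ (hpsi i)]
    refine le_of_eq (lintegral_congr_ae ?_)
    filter_upwards [hle, h0 i] with x hx hx0
    change p i x * psi (p i x) = _
    rw [mul_psi ((ENNReal.le_tsum i).trans hx)]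
    simp only [hp]
    rw [ENNReal.toReal_ofReal hx0]

/-- a countable dense family of invariant sets -/
lemma exists_dense_inv (G : Type*) {X : Type*} [Group G] [mX : MeasurableSpace X]
    [StandardBorelSpace X] [MulAction G X] (μ : Measure X) [IsProbabilityMeasure μ] :
    ∃ C : ℕ → Set X, (∀ j, MeasurableSet (C j)) ∧
      (∀ j, ∀ g : G, (fun x => g • x) ⁻¹' (C j) = C j) ∧
      ∀ m : MeasurableSpace X, m ≤ mX → (∀ j, ∃ B, MeasurableSet[m] B ∧ C j =ᵐ[μ] B) →
        ∀ A, MeasurableSet[mX] A → (∀ g : G, (fun x => g • x) ⁻¹' A = A) →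
          ∃ B, MeasurableSet[m] B ∧ A =ᵐ[μ] B := by
  classical
  let J := {A : Set X // MeasurableSet A ∧ ∀ g : G, (fun x => g • x) ⁻¹' A = A}
  let ι : J → Lp ℝ 1 μ := fun A => indicatorConstLp 1 A.2.1 (measure_ne_top μ _) (1 : ℝ)
  have hone : Fact ((1 : ℝ≥0∞) ≠ ⊤) := ⟨ENNReal.one_ne_top⟩
  have : Nonempty J := ⟨⟨∅, MeasurableSet.empty, fun g => by simp⟩⟩
  have hsep : TopologicalSpace.IsSeparable (range ι) :=
    TopologicalSpace.IsSeparable.of_separableSpace _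
  have : TopologicalSpace.SeparableSpace (range ι) := hsep.separableSpace
  obtain ⟨d, hd⟩ := TopologicalSpace.exists_dense_seq (range ι)
  have hc : ∀ n, ∃ A : J, ι A = d n := fun n => (d n).2
  choose C hC using hc
  refine ⟨fun n => (C n).1, fun n => (C n).2.1, fun n => (C n).2.2, ?_⟩
  intro m hm h A hA hAi
  have hcl := isClosed_aestronglyMeasurable (F := ℝ) (p := 1) (μ := μ) hm
  have hsub : range (fun n => (d n : Lp ℝ 1 μ)) ⊆ {f : Lp ℝ 1 μ | AEStronglyMeasurable[m] f μ} := by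
    rintro _ ⟨n, rfl⟩
    obtain ⟨B, hB, hCB⟩ := h n
    refine ⟨B.indicator (fun _ => (1 : ℝ)),
      (stronglyMeasurable_const).indicator hB, ?_⟩
    simp only [← hC]
    refine indicatorConstLp_coeFn.trans ?_
    exact indicator_one_congr hCB
  have hmem : ι ⟨A, hA, hAi⟩ ∈ {f : Lp ℝ 1 μ | AEStronglyMeasurable[m] f μ} := by
    have h1 : (⟨ι ⟨A, hA, hAi⟩, mem_range_self _⟩ : range ι) ∈ closure (range d) := hd _
    have h2 : ι ⟨A, hA, hAi⟩ ∈ closure ((Subtype.val : range ι → Lp ℝ 1 μ) '' range d) :=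
      closure_subtype.1 h1
    rw [← range_comp] at h2
    exact closure_minimal hsub hcl h2
  obtain ⟨f, hf, hfe⟩ := hmem
  refine ⟨f ⁻¹' {1}, hf.measurable (measurableSet_singleton 1), ?_⟩
  have e : A.indicator (fun _ => (1 : ℝ)) =ᵐ[μ] f :=
    (indicatorConstLp_coeFn (p := 1) (hs := hA) (hμs := measure_ne_top μ A)).symm.trans hfe
  filter_upwards [e] with x hx
  apply propext
  change x ∈ A ↔ f x = 1
  rw [← hx]
  by_cases hxA : x ∈ A <;> simp [hxA]

lemma exists_bits {X : Type*} [MeasurableSpace X] (μ : Measure X) (E : ℕ → Set X)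
    (hE : ∀ i, MeasurableSet (E i)) (hs : ∑' i, 2 ^ i * μ (E i) ≠ ⊤) :
    ∃ t : X → ℕ, Measurable t ∧ ∫⁻ x, (t x : ℝ≥0∞) ∂μ ≤ ∑' i, 2 ^ i * μ (E i) ∧
      ∀ i, {x | (t x).testBit i = true} =ᵐ[μ] E i := by
  classical
  set r : X → ℝ≥0∞ := fun x => ∑' i, (E i).indicator (fun _ => (2 : ℝ≥0∞) ^ i) x with hr
  have hrm : Measurable r := Measurable.tsum fun i => measurable_const.indicator (hE i)
  have hInt : ∫⁻ x, r x ∂μ = ∑' i, 2 ^ i * μ (E i) := by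
    rw [hr, lintegral_tsum (fun i => (measurable_const.indicator (hE i)).aemeasurable)]
    refine tsum_congr fun i => ?_
    rw [lintegral_indicator_const (hE i)]
  refine ⟨fun x => ⌊(r x).toNNReal⌋₊, Nat.measurable_floor.comp hrm.ennreal_toNNReal, ?_, ?_⟩
  · rw [← hInt]
    refine lintegral_mono fun x => ?_
    by_cases hx : r x = ⊤
    · simp [hx]
    · have h1 : ((⌊(r x).toNNReal⌋₊ : NNReal)) ≤ (r x).toNNReal := Nat.floor_le zero_le
      calc ((⌊(r x).toNNReal⌋₊ : ℕ) : ℝ≥0∞) = ((⌊(r x).toNNReal⌋₊ : NNReal) : ℝ≥0∞) := by simp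
        _ ≤ ((r x).toNNReal : ℝ≥0∞) := ENNReal.coe_le_coe.2 h1
        _ = r x := ENNReal.coe_toNNReal hx
  · have hs' : ∑' i, μ (E i) ≠ ⊤ := by
      refine ne_top_of_le_ne_top hs (ENNReal.tsum_le_tsum fun i => ?_)
      exact le_mul_of_one_le_left zero_le (one_le_pow₀ (by norm_num))
    intro i
    filter_upwards [ae_eventually_notMem hs'] with x hx
    rw [Filter.eventually_atTop] at hx
    obtain ⟨N, hN⟩ := hx
    set T : Finset ℕ := (Finset.range N).filter (fun i => x ∈ E i) with hT
    have hTm : ∀ i, i ∈ T ↔ x ∈ E i := by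
      intro i
      simp only [hT, Finset.mem_filter, Finset.mem_range, and_iff_right_iff_imp]
      intro hi
      by_contra hc
      exact hN i (by omega) hi
    have hre : r x = ((∑ i ∈ T, 2 ^ i : ℕ) : ℝ≥0∞) := by
      simp only [hr]
      rw [tsum_eq_sum (s := T)]
      · rw [Finset.sum_congr rfl (g := fun i => (2 : ℝ≥0∞) ^ i)]
        · push_cast; rfl
        · intro j hj
          exact indicator_of_mem ((hTm j).1 hj) _
      · intro j hj
        exact indicator_of_notMem (fun h => hj ((hTm j).2 h)) _
    apply propext
    change (⌊(r x).toNNReal⌋₊).testBit i = true ↔ x ∈ E i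
    rw [hre, ENNReal.toNNReal_natCast, Nat.floor_natCast, ← Nat.mem_bitIndices, ← List.mem_toFinset,
      Finset.toFinset_bitIndices_sum_two_pow, hTm]

section coding

variable {G X : Type*} [Group G] [MulAction G X]

/-- points whose first hitting index of `M` is `k` -/
def firstHit (u : ℕ → G) (M : Set X) (k : ℕ) : Set X :=
  {y | u k • y ∈ M ∧ ∀ j < k, u j • y ∉ M}

def hitBack (u : ℕ → G) (M : Set X) (k : ℕ) : Set X :=
  {x | (u k)⁻¹ • x ∈ firstHit u M k}

open Classical in
noncomputable def costV (u : ℕ → G) (M : Set X) (q : ℕ → X → ℝ≥0∞) (x : X) (k i : ℕ) : ℝ≥0∞ :=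
  if x ∈ hitBack u M k then psi (q i ((u k)⁻¹ • x)) else if i = 0 then 0 else ⊤

noncomputable def costC (u : ℕ → G) (M : Set X) (q : ℕ → X → ℝ≥0∞) (x : X) (s : ℕ →₀ ℕ) : ℝ≥0∞ :=
  ∑' k, costV u M q x k (s k)

open Classical in
noncomputable def nmF (u : ℕ → G) (M : Set X) (a : X → ℕ) (x : X) (k : ℕ) : ℕ :=
  if x ∈ hitBack u M k then a ((u k)⁻¹ • x) else 0

open Classical in
noncomputable def nameOf (u : ℕ → G) (M : Set X) (a : X → ℕ) (x : X) : ℕ →₀ ℕ :=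
  if h : ∃ s : ℕ →₀ ℕ, ∀ k, s k = nmF u M a x k then h.choose else 0

noncomputable def theCode : (ℕ →₀ ℕ) → ℕ := (exists_injective_nat (ℕ →₀ ℕ)).choose

lemma theCode_inj : Injective theCode := (exists_injective_nat (ℕ →₀ ℕ)).choose_spec

open Classical in
noncomputable def preK (u : ℕ → G) (M : Set X) (q : ℕ → X → ℝ≥0∞) (x : X) (s : ℕ →₀ ℕ) : ℕ :=
  if x ∈ M then max 1 ⌊(rk theCode (costC u M q x) s).toNNReal⌋₊ else 0

noncomputable def codeK (u : ℕ → G) (M : Set X) (a : X → ℕ) (q : ℕ → X → ℝ≥0∞) (x : X) : ℕ :=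
  preK u M q x (nameOf u M a x)

lemma hitBack_subset (u : ℕ → G) (M : Set X) (k : ℕ) : hitBack u M k ⊆ M := by
  intro x hx
  have := hx.1
  rwa [smul_inv_smul] at this

lemma measurableSet_firstHit {m : MeasurableSpace X} (hm : ∀ g : G, Measurable fun x : X => g • x)
    (u : ℕ → G) {M : Set X} (hM : MeasurableSet M) (k : ℕ) : MeasurableSet (firstHit u M k) := by
  have : firstHit u M k = (fun x => u k • x) ⁻¹' M ∩
      ⋂ j ∈ Finset.range k, ((fun x => u j • x) ⁻¹' M)ᶜ := by
    ext x; simp [firstHit]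
  rw [this]
  exact (hm _ hM).inter (Finset.measurableSet_biInter _ fun j _ => (hm _ hM).compl)

lemma measurableSet_hitBack {m : MeasurableSpace X} (hm : ∀ g : G, Measurable fun x : X => g • x)
    (u : ℕ → G) {M : Set X} (hM : MeasurableSet M) (k : ℕ) : MeasurableSet (hitBack u M k) :=
  hm _ (measurableSet_firstHit hm u hM k)

lemma measurable_costC {m : MeasurableSpace X} (hm : ∀ g : G, Measurable fun x : X => g • x)
    (u : ℕ → G) {M : Set X} (hM : MeasurableSet M) (q : ℕ → X → ℝ≥0∞)
    (hq : ∀ i, Measurable (q i)) (s : ℕ →₀ ℕ) : Measurable fun x => costC u M q x s := by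
  unfold costC
  refine Measurable.tsum fun k => ?_
  unfold costV
  refine Measurable.ite (measurableSet_hitBack hm u hM k) ?_ measurable_const
  exact measurable_psi.comp ((hq _).comp (hm _))

lemma measurable_preK {m : MeasurableSpace X} (hm : ∀ g : G, Measurable fun x : X => g • x)
    (u : ℕ → G) {M : Set X} (hM : MeasurableSet M) (q : ℕ → X → ℝ≥0∞)
    (hq : ∀ i, Measurable (q i)) (s : ℕ →₀ ℕ) : Measurable fun x => preK u M q x s := by
  unfold preK
  refine Measurable.ite hM ?_ measurable_const
  refine measurable_const.max ?_
  exact Nat.measurable_floor.comp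
    (measurable_rk theCode _ (measurable_costC hm u hM q hq) s).ennreal_toNNReal

lemma measurable_comp_countable {S Y : Type*} [Countable S] {m : MeasurableSpace X}
    [MeasurableSpace Y] (H : X → S → Y) (hH : ∀ s, Measurable fun x => H x s) (n : X → S)
    (hn : ∀ s, MeasurableSet {x | n x = s}) : Measurable fun x => H x (n x) := by
  intro T hT
  have : (fun x => H x (n x)) ⁻¹' T = ⋃ s, ({x | n x = s} ∩ (fun x => H x s) ⁻¹' T) := by
    ext x; simp
  rw [this]
  exact MeasurableSet.iUnion fun s => (hn s).inter (hH s hT)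

lemma nameOf_eq (u : ℕ → G) (M : Set X) (a : X → ℕ) (x : X)
    (h : {k | x ∈ hitBack u M k}.Finite) (k : ℕ) : nameOf u M a x k = nmF u M a x k := by
  have hex : ∃ s : ℕ →₀ ℕ, ∀ k, s k = nmF u M a x k := by
    have hf : (Function.support (nmF u M a x)).Finite := by
      refine h.subset fun k hk => ?_
      by_contra hc
      exact hk (if_neg hc)
    exact ⟨Finsupp.ofSupportFinite _ hf, fun k => rfl⟩
  unfold nameOf
  rw [dif_pos hex]
  exact hex.choose_spec k

lemma measurableSet_nameOf {m : MeasurableSpace X} (hm : ∀ g : G, Measurable fun x : X => g • x)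
    (u : ℕ → G) {M : Set X} (hM : MeasurableSet M) (a : X → ℕ) (ha : Measurable a) (s : ℕ →₀ ℕ) :
    MeasurableSet {x | nameOf u M a x = s} := by
  classical
  have hN : ∀ s : ℕ →₀ ℕ, MeasurableSet {x | ∀ k, s k = nmF u M a x k} := by
    intro s
    have : {x | ∀ k, s k = nmF u M a x k} = ⋂ k, {x | s k = nmF u M a x k} := by
      ext x; simp
    rw [this]
    refine MeasurableSet.iInter fun k => ?_
    refine measurableSet_eq_fun measurable_const ?_
    unfold nmF
    exact Measurable.ite (measurableSet_hitBack hm u hM k) (ha.comp (hm _)) measurable_const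
  have hE : MeasurableSet {x | ∃ s : ℕ →₀ ℕ, ∀ k, s k = nmF u M a x k} := by
    have : {x | ∃ s : ℕ →₀ ℕ, ∀ k, s k = nmF u M a x k} =
        ⋃ s : ℕ →₀ ℕ, {x | ∀ k, s k = nmF u M a x k} := by
      ext x; simp
    rw [this]
    exact MeasurableSet.iUnion hN
  have : {x | nameOf u M a x = s} = {x | ∀ k, s k = nmF u M a x k} ∪
      ({x | ∃ s : ℕ →₀ ℕ, ∀ k, s k = nmF u M a x k}ᶜ ∩ {x | (0 : ℕ →₀ ℕ) = s}) := by
    ext x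
    by_cases hex : ∃ s : ℕ →₀ ℕ, ∀ k, s k = nmF u M a x k
    · have e : nameOf u M a x = hex.choose := dif_pos hex
      have e2 := hex.choose_spec
      simp only [mem_ofPred_eq, mem_union, mem_inter_iff, mem_compl_iff, hex, not_true, false_and,
        or_false]
      rw [e]
      constructor
      · rintro rfl; exact e2
      · intro h
        ext k
        rw [e2 k, h k]
    · have e : nameOf u M a x = 0 := dif_neg hex
      have hno : ¬ ∀ k, s k = nmF u M a x k := fun h => hex ⟨s, h⟩
      simp only [mem_ofPred_eq, mem_union, mem_inter_iff, mem_compl_iff, hex, not_false_iff,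
        true_and, hno, false_or, e]
  rw [this]
  exact (hN s).union (hE.compl.inter (MeasurableSet.const _))

lemma measurable_codeK {m : MeasurableSpace X} (hm : ∀ g : G, Measurable fun x : X => g • x)
    (u : ℕ → G) {M : Set X} (hM : MeasurableSet M) (a : X → ℕ) (ha : Measurable a)
    (q : ℕ → X → ℝ≥0∞) (hq : ∀ i, Measurable (q i)) : Measurable (codeK u M a q) :=
  measurable_comp_countable _ (measurable_preK hm u hM q hq) _ (measurableSet_nameOf hm u hM a ha)

lemma costC_kraft (u : ℕ → G) (M : Set X) (q : ℕ → X → ℝ≥0∞) (hq1 : ∀ x, ∑' i, q i x ≤ 1) (x : X)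
    (T : Finset (ℕ →₀ ℕ)) : ∑ s ∈ T, eneg (costC u M q x s) ≤ 1 := by
  refine kraft (costV u M q x) (fun k => ?_) T
  unfold costV
  by_cases h : x ∈ hitBack u M k
  · simp only [if_pos h]
    refine le_trans (le_of_eq (tsum_congr fun i => ?_)) (hq1 ((u k)⁻¹ • x))
    exact eneg_psi ((ENNReal.le_tsum i).trans (hq1 _))
  · simp only [if_neg h]
    rw [tsum_eq_single 0]
    · simp [eneg_zero]
    · intro i hi
      simp [hi, eneg_top]

lemma preK_spec (u : ℕ → G) (M : Set X) (q : ℕ → X → ℝ≥0∞) (hq1 : ∀ x, ∑' i, q i x ≤ 1) (x : X)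
    (hx : x ∈ M) (s : ℕ →₀ ℕ) (hs : costC u M q x s ≠ ⊤) :
    rk theCode (costC u M q x) s = preK u M q x s ∧
      ENNReal.ofReal (Real.log (preK u M q x s)) ≤ costC u M q x s := by
  obtain ⟨n, h1, h2, h3⟩ := rk_spec theCode _ (costC_kraft u M q hq1 x) s hs
  have : preK u M q x s = n := by
    unfold preK
    rw [if_pos hx, h1]
    simp [h2]
  rw [this]
  exact ⟨h1, h3⟩

lemma firstHit_disjoint (u : ℕ → G) (M : Set X) :
    Pairwise (Function.onFun Disjoint (firstHit u M)) := by
  have key : ∀ k l, k < l → Disjoint (firstHit u M k) (firstHit u M l) := by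
    intro k l hkl
    rw [Set.disjoint_left]
    rintro x hx hy
    exact hy.2 k hkl hx.1
  intro k l hkl
  rcases lt_or_gt_of_ne hkl with h1 | h1
  · exact key k l h1
  · exact (key l k h1).symm

lemma ae_hitBack_finite [mX : MeasurableSpace X] (μ : Measure X) [IsProbabilityMeasure μ]
    (hpmp : IsPmp G μ) (u : ℕ → G) {M : Set X} (hM : MeasurableSet M) :
    ∀ᵐ x ∂μ, {k | x ∈ hitBack u M k}.Finite := by
  have hm : ∀ g : G, Measurable fun x : X => g • x := fun g => (hpmp g).measurable
  have hsum : ∑' k, μ (hitBack u M k) ≠ ⊤ := by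
    have : ∀ k, μ (hitBack u M k) = μ (firstHit u M k) := fun k =>
      (hpmp (u k)⁻¹).measure_preimage (measurableSet_firstHit hm u hM k).nullMeasurableSet
    rw [tsum_congr this, ← measure_iUnion (firstHit_disjoint u M) (measurableSet_firstHit hm u hM)]
    exact measure_ne_top _ _
  filter_upwards [ae_eventually_notMem hsum] with x hx
  rw [Filter.eventually_atTop] at hx
  obtain ⟨N, hN⟩ := hx
  refine (Set.finite_lt_nat N).subset fun k hk => ?_
  by_contra hc
  exact hN k (not_lt.1 hc) hk

lemma lintegral_costC [mX : MeasurableSpace X] (μ : Measure X) [IsProbabilityMeasure μ]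
    (hpmp : IsPmp G μ) (u : ℕ → G) {M : Set X} (hM : MeasurableSet M)
    (a : X → ℕ) (ha : Measurable a) (q : ℕ → X → ℝ≥0∞) (hq : ∀ i, Measurable (q i)) :
    ∫⁻ x, costC u M q x (nameOf u M a x) ∂μ ≤ ∫⁻ x, psi (q (a x) x) ∂μ := by
  have hm : ∀ g : G, Measurable fun x : X => g • x := fun g => (hpmp g).measurable
  set L : X → ℝ≥0∞ := fun x => psi (q (a x) x) with hL
  have hLm : Measurable L := measurable_comp_countable (fun x i => psi (q i x))
    (fun i => measurable_psi.comp (hq i)) a (fun i => ha (measurableSet_singleton i))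
  have hV := measurableSet_firstHit hm u hM
  have h1 : ∀ᵐ x ∂μ, costC u M q x (nameOf u M a x) =
      ∑' k, (firstHit u M k).indicator L ((u k)⁻¹ • x) := by
    filter_upwards [ae_hitBack_finite μ hpmp u hM] with x hx
    unfold costC
    refine tsum_congr fun k => ?_
    rw [nameOf_eq u M a x hx]
    unfold costV nmF
    by_cases hk : x ∈ hitBack u M k
    · have hk' : (u k)⁻¹ • x ∈ firstHit u M k := hk
      rw [if_pos hk, if_pos hk, indicator_of_mem hk']
    · have hk' : (u k)⁻¹ • x ∉ firstHit u M k := hk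
      rw [if_neg hk, if_neg hk, if_pos rfl, indicator_of_notMem hk']
  rw [lintegral_congr_ae h1, lintegral_tsum]
  · have h2 : ∀ k, ∫⁻ x, (firstHit u M k).indicator L ((u k)⁻¹ • x) ∂μ =
        ∫⁻ x in firstHit u M k, L x ∂μ := fun k => by
      rw [(hpmp (u k)⁻¹).lintegral_comp (hLm.indicator (hV k)), lintegral_indicator (hV k)]
    rw [tsum_congr h2, ← lintegral_iUnion hV (firstHit_disjoint u M)]
    exact setLIntegral_le_lintegral _ _
  · exact fun k => ((hLm.indicator (hV k)).comp (hm _)).aemeasurable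

lemma lintegral_log_codeK [mX : MeasurableSpace X] (μ : Measure X) [IsProbabilityMeasure μ]
    (hpmp : IsPmp G μ) (u : ℕ → G) {M : Set X} (hM : MeasurableSet M)
    (a : X → ℕ) (ha : Measurable a) (q : ℕ → X → ℝ≥0∞) (hq : ∀ i, Measurable (q i))
    (hq1 : ∀ x, ∑' i, q i x ≤ 1) :
    ∫⁻ x, ENNReal.ofReal (Real.log (codeK u M a q x)) ∂μ ≤ ∫⁻ x, psi (q (a x) x) ∂μ := by
  refine le_trans (lintegral_mono fun x => ?_) (lintegral_costC μ hpmp u hM a ha q hq)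
  by_cases hx : x ∈ M
  · by_cases ht : costC u M q x (nameOf u M a x) = ⊤
    · rw [ht]; exact le_top
    · exact (preK_spec u M q hq1 x hx _ ht).2
  · simp [codeK, preK, hx]

lemma measSet_eq_nat {m : MeasurableSpace X} {f g : X → ℕ} (hf : Measurable f)
    (hg : Measurable g) : MeasurableSet {x | f x = g x} := measurableSet_eq_fun hf hg

/-- decoding -/
lemma decode (N : MeasurableSpace X) [mX : MeasurableSpace X] (μ : Measure X)
    [IsProbabilityMeasure μ]
    (hpmp : IsPmp G μ) (u : ℕ → G) (hu : Surjective u) {M : Set X} (hM : MeasurableSet M)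
    (hMc : ∀ᵐ x ∂μ, ∃ g : G, g • x ∈ M)
    (a : X → ℕ) (ha : Measurable a) (q : ℕ → X → ℝ≥0∞) (hq : ∀ i, Measurable (q i))
    (hq1 : ∀ x, ∑' i, q i x ≤ 1) (hfin : ∫⁻ x, psi (q (a x) x) ∂μ ≠ ⊤)
    (hNm : ∀ g : G, Measurable[N, N] fun x : X => g • x)
    (hNae : ∀ A B : Set X, MeasurableSet[N] A → A =ᵐ[μ] B → MeasurableSet[N] B)
    (hqN : ∀ i, Measurable[N] (q i)) (hKN : Measurable[N] (codeK u M a q)) (i : ℕ) :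
    MeasurableSet[N] (a ⁻¹' {i}) := by
  have hm : ∀ g : G, Measurable fun x : X => g • x := fun g => (hpmp g).measurable
  have hMN : MeasurableSet[N] M := by
    have : M = (codeK u M a q) ⁻¹' {0}ᶜ := by
      ext x
      by_cases hx : x ∈ M
      · simp [codeK, preK, hx]
      · simp [codeK, preK, hx]
    rw [this]
    exact hKN (measurableSet_singleton 0).compl
  have hcm : Measurable fun x => costC u M q x (nameOf u M a x) :=
    measurable_comp_countable _ (measurable_costC hm u hM q hq) _ (measurableSet_nameOf hm u hM a ha)
  have hcfin : ∀ᵐ x ∂μ, costC u M q x (nameOf u M a x) < ⊤ :=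
    ae_lt_top hcm (ne_top_of_le_ne_top hfin (lintegral_costC μ hpmp u hM a ha q hq))
  have hQ : ∀ s : ℕ →₀ ℕ, MeasurableSet[N] {x | x ∈ M ∧ nameOf u M a x = s} := by
    intro s
    have hP : MeasurableSet[N] (M ∩ ((fun x => costC u M q x s) ⁻¹' {⊤}ᶜ ∩
        {x | codeK u M a q x = preK u M q x s})) := by
      refine MeasurableSet.inter hMN (MeasurableSet.inter ?_ ?_)
      · exact measurable_costC (m := N) hNm u hMN q hqN s (measurableSet_singleton _).compl
      · exact measSet_eq_nat (m := N) hKN (measurable_preK (m := N) hNm u hMN q hqN s)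
    refine hNae _ _ hP ?_
    filter_upwards [hcfin] with x hx
    apply propext
    change (x ∈ M ∧ costC u M q x s ≠ ⊤ ∧ codeK u M a q x = preK u M q x s) ↔
      (x ∈ M ∧ nameOf u M a x = s)
    constructor
    · rintro ⟨h1, h2, h3⟩
      refine ⟨h1, ?_⟩
      refine rk_inj theCode theCode_inj _ (costC_kraft u M q hq1 x) _ _ hx.ne h2 ?_
      rw [(preK_spec u M q hq1 x h1 _ hx.ne).1, (preK_spec u M q hq1 x h1 _ h2).1]
      congr 1
    · rintro ⟨h1, rfl⟩
      exact ⟨h1, hx.ne, rfl⟩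
  have hY : ∀ k i, MeasurableSet[N] {x | x ∈ M ∧ nameOf u M a x k = i} := by
    intro k i
    have : {x | x ∈ M ∧ nameOf u M a x k = i} =
        ⋃ s : ℕ →₀ ℕ, ⋃ _ : s k = i, {x | x ∈ M ∧ nameOf u M a x = s} := by
      ext x
      simp only [mem_ofPred_eq, mem_iUnion]
      constructor
      · rintro ⟨h1, h2⟩
        exact ⟨_, h2, h1, rfl⟩
      · rintro ⟨s, h1, h2, rfl⟩
        exact ⟨h2, h1⟩
    rw [this]
    exact MeasurableSet.iUnion fun s => MeasurableSet.iUnion fun _ => hQ s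
  have hZ : MeasurableSet[N] (⋃ k, (firstHit u M k ∩
      (fun x => u k • x) ⁻¹' {x | x ∈ M ∧ nameOf u M a x k = i})) :=
    MeasurableSet.iUnion fun k => MeasurableSet.inter
      (measurableSet_firstHit (m := N) hNm u hMN k) (hNm _ (hY k i))
  refine hNae _ _ hZ ?_
  have hgood : ∀ᵐ x ∂μ, ∀ k, {j | u k • x ∈ hitBack u M j}.Finite := by
    refine ae_all_iff.2 fun k => ?_
    exact (hpmp (u k)).quasiMeasurePreserving.ae (ae_hitBack_finite μ hpmp u hM)
  filter_upwards [hgood, hMc] with y hy hyM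
  have key : ∀ k, y ∈ firstHit u M k → u k • y ∈ M ∧ nameOf u M a (u k • y) k = a y := by
    intro k hk
    refine ⟨hk.1, ?_⟩
    have hb : u k • y ∈ hitBack u M k := by
      change (u k)⁻¹ • u k • y ∈ firstHit u M k
      rwa [inv_smul_smul]
    rw [nameOf_eq u M a _ (hy k), nmF, if_pos hb, inv_smul_smul]
  apply propext
  change y ∈ (⋃ k, (firstHit u M k ∩
      (fun x => u k • x) ⁻¹' {x | x ∈ M ∧ nameOf u M a x k = i})) ↔ a y = i
  rw [mem_iUnion]
  constructor
  · rintro ⟨k, hk, h1, h2⟩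
    rw [← (key k hk).2]
    exact h2
  · intro h
    classical
    obtain ⟨g, hg⟩ := hyM
    obtain ⟨k0, rfl⟩ := hu g
    have hex : ∃ k, u k • y ∈ M := ⟨k0, hg⟩
    have hk : y ∈ firstHit u M (Nat.find hex) :=
      ⟨Nat.find_spec hex, fun j hj => Nat.find_min hex hj⟩
    exact ⟨_, hk, (key _ hk).1, by rw [← h]; exact (key _ hk).2⟩

end coding

lemma tsum_pair_weights (w1 w2 : ℕ → ℝ) (h1 : ∀ n, 0 < w1 n)
    (hs1 : ∑' n, ENNReal.ofReal (w1 n) ≤ 1) (hs2 : ∑' n, ENNReal.ofReal (w2 n) ≤ 1) :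
    ∑' n : ℕ, ENNReal.ofReal (w1 n.unpair.1 * w2 n.unpair.2) ≤ 1 := by
  have : ∑' n : ℕ, ENNReal.ofReal (w1 n.unpair.1 * w2 n.unpair.2) =
      ∑' p : ℕ × ℕ, ENNReal.ofReal (w1 p.1) * ENNReal.ofReal (w2 p.2) := by
    rw [← Nat.pairEquiv.tsum_eq]
    refine tsum_congr fun p => ?_
    rcases p with ⟨i, j⟩
    have : Nat.pairEquiv (i, j) = Nat.pair i j := rfl
    rw [this, Nat.unpair_pair, ENNReal.ofReal_mul (h1 i).le]
  rw [this, ENNReal.tsum_prod (f := fun i j => ENNReal.ofReal (w1 i) * ENNReal.ofReal (w2 j))]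
  simp_rw [ENNReal.tsum_mul_left]
  rw [ENNReal.tsum_mul_right]
  calc _ ≤ (1 : ℝ≥0∞) * 1 := by gcongr
    _ = 1 := by simp

lemma shEnt_pair_le {X : Type*} [MeasurableSpace X] (μ : Measure X) [IsProbabilityMeasure μ]
    (K t : X → ℕ) (hK : Measurable K) (ht : Measurable t) (M : Set X) (hM : MeasurableSet M)
    (hKM : ∀ x, x ∉ M → K x = 0) (e η C1 C2 : ℝ) (he : 0 < e) (hη : 0 < η)
    (w1 w2 : ℕ → ℝ) (hC1 : 0 ≤ C1) (h1 : ∀ n, 0 < w1 n) (h1' : ∀ n, w1 n ≤ 1)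
    (hs1 : ∑' n, ENNReal.ofReal (w1 n) ≤ 1) (h10 : -Real.log (w1 0) ≤ e)
    (h1k : ∀ k, 1 ≤ k → -Real.log (w1 k) ≤ (1 + η) * Real.log k + C1)
    (hC2 : 0 ≤ C2) (h2 : ∀ n, 0 < w2 n) (h2' : ∀ n, w2 n ≤ 1)
    (hs2 : ∑' n, ENNReal.ofReal (w2 n) ≤ 1) (h20 : -Real.log (w2 0) ≤ e)
    (h2k : ∀ k, 1 ≤ k → -Real.log (w2 k) ≤ (1 + 1) * Real.log k + C2) :
    shEnt μ (fun n => (fun x => Nat.pair (K x) (t x)) ⁻¹' {n}) ≤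
      ENNReal.ofReal e + ENNReal.ofReal e +
        (ENNReal.ofReal (1 + η) * ∫⁻ x, ENNReal.ofReal (Real.log (K x)) ∂μ) +
        ENNReal.ofReal C1 * μ M + ENNReal.ofReal (C2 + 2) * ∫⁻ x, (t x : ℝ≥0∞) ∂μ := by
  have hb : Measurable fun x => Nat.pair (K x) (t x) :=
    (measurable_of_countable (fun p : ℕ × ℕ => Nat.pair p.1 p.2)).comp (hK.prodMk ht)
  refine (shEnt_le μ _ hb (fun n => w1 n.unpair.1 * w2 n.unpair.2) (fun n => mul_pos (h1 _) (h2 _))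
    (fun n => mul_le_one₀ (h1' _) (h2 _).le (h2' _)) (tsum_pair_weights w1 w2 h1 hs1 hs2)).trans ?_
  have hpt : ∀ x, ENNReal.ofReal (-Real.log (w1 (Nat.pair (K x) (t x)).unpair.1 *
      w2 (Nat.pair (K x) (t x)).unpair.2)) ≤
      ENNReal.ofReal e + ENNReal.ofReal e +
        ENNReal.ofReal (1 + η) * ENNReal.ofReal (Real.log (K x)) +
        M.indicator (fun _ => ENNReal.ofReal C1) x + ENNReal.ofReal (C2 + 2) * (t x : ℝ≥0∞) := by
    intro x
    have hlogK : 0 ≤ Real.log (K x) := Real.log_natCast_nonneg _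
    have hind : M.indicator (fun _ => ENNReal.ofReal C1) x =
        ENNReal.ofReal (M.indicator (fun _ => C1) x) := by
      by_cases hx : x ∈ M <;> simp [hx]
    have hi0 : 0 ≤ M.indicator (fun _ => C1) x := indicator_nonneg (fun _ _ => hC1) x
    have A1 : -Real.log (w1 (K x)) ≤ e + (1 + η) * Real.log (K x) + M.indicator (fun _ => C1) x := by
      by_cases hx : x ∈ M
      · rcases Nat.eq_zero_or_pos (K x) with h | h
        · rw [h] at hlogK ⊢
          have : 0 ≤ (1 + η) * Real.log ((0 : ℕ) : ℝ) := by positivity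
          linarith
        · have := h1k _ h
          simp only [hx, indicator_of_mem]
          linarith
      · have : 0 ≤ (1 + η) * Real.log (K x) := by positivity
        rw [hKM x hx] at this ⊢
        linarith
    have A2 : -Real.log (w2 (t x)) ≤ e + (C2 + 2) * (t x : ℝ) := by
      rcases Nat.eq_zero_or_pos (t x) with h | h
      · rw [h]; simpa using h20
      · have := h2k _ h
        have ht1 : (1 : ℝ) ≤ t x := by exact_mod_cast h
        have := Real.log_le_sub_one_of_pos (show (0 : ℝ) < t x by linarith)
        nlinarith
    have hcast : (t x : ℝ≥0∞) = ENNReal.ofReal (t x : ℝ) := by simp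
    rw [Nat.unpair_pair, Real.log_mul (h1 _).ne' (h2 _).ne', hind, hcast,
      ← ENNReal.ofReal_mul (by linarith), ← ENNReal.ofReal_mul (by linarith),
      ← ENNReal.ofReal_add he.le he.le, ← ENNReal.ofReal_add (by linarith) (by positivity),
      ← ENNReal.ofReal_add (by positivity) hi0, ← ENNReal.ofReal_add (by positivity) (by positivity)]
    apply ENNReal.ofReal_le_ofReal
    simp only
    linarith
  refine (lintegral_mono hpt).trans (le_of_eq ?_)
  have hmK : Measurable fun x => ENNReal.ofReal (Real.log (K x)) :=
    (measurable_of_countable (fun n : ℕ => ENNReal.ofReal (Real.log n))).comp hK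
  have hmt : Measurable fun x => (t x : ℝ≥0∞) :=
    (measurable_of_countable (fun n : ℕ => (n : ℝ≥0∞))).comp ht
  rw [lintegral_add_right _ (hmt.const_mul _), lintegral_add_right _ (measurable_const.indicator hM),
    lintegral_add_right _ (hmK.const_mul _), lintegral_const, measure_univ, mul_one,
    lintegral_const_mul _ hmK, lintegral_const_mul _ hmt, lintegral_indicator_const hM]

lemma sigmaG_le {G X : Type*} [Group G] [MulAction G X] (m : MeasurableSpace X)
    (hm : ∀ g : G, Measurable[m, m] fun x : X => g • x) (S : Set (Set X))
    (hS : ∀ A ∈ S, MeasurableSet[m] A) : sigmaG G S ≤ m := by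
  refine MeasurableSpace.generateFrom_le ?_
  rintro _ ⟨g, A, hA, rfl⟩
  exact hm g (hS A hA)

lemma invariant_sup {G X : Type*} [Group G] [MulAction G X] (S : Set (Set X))
    (F : MeasurableSpace X) (hF : InvariantAlg G F) (g : G) :
    Measurable[sigmaG G S ⊔ F, sigmaG G S ⊔ F] fun x : X => g • x := by
  rw [measurable_iff_le_map]
  refine sup_le ?_ ?_
  · refine MeasurableSpace.generateFrom_le ?_
    rintro _ ⟨h, A, hA, rfl⟩
    change MeasurableSet[sigmaG G S ⊔ F] _
    refine (le_sup_left : sigmaG G S ≤ sigmaG G S ⊔ F) _ ?_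
    refine MeasurableSpace.measurableSet_generateFrom ⟨h * g, A, hA, ?_⟩
    ext x
    simp [mul_smul]
  · intro A hA
    change MeasurableSet[sigmaG G S ⊔ F] _
    exact (le_sup_right : F ≤ sigmaG G S ⊔ F) _ (hF g A hA)

/-- the σ-algebra of sets equal modulo null sets to a set of `m` -/
def aeSpace {X : Type*} (m : MeasurableSpace X) [mX : MeasurableSpace X] (μ : Measure X) :
    MeasurableSpace X := @eventuallyMeasurableSpace X m (ae μ) _

lemma aeSpace_iff {X : Type*} (m : MeasurableSpace X) [mX : MeasurableSpace X] (μ : Measure X)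
    (A : Set X) : MeasurableSet[aeSpace m μ] A ↔ ∃ B, MeasurableSet[m] B ∧ A =ᵐ[μ] B := Iff.rfl

lemma le_aeSpace {X : Type*} (m : MeasurableSpace X) [mX : MeasurableSpace X] (μ : Measure X) :
    m ≤ aeSpace m μ := fun A hA => ⟨A, hA, Filter.EventuallyEq.rfl⟩

lemma measurable_aeSpace {G X : Type*} [Group G] [MulAction G X] (m : MeasurableSpace X)
    [mX : MeasurableSpace X] (μ : Measure X) (hpmp : IsPmp G μ)
    (hm : ∀ g : G, Measurable[m, m] fun x : X => g • x) (g : G) :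
    Measurable[aeSpace m μ, aeSpace m μ] fun x : X => g • x := by
  rintro A ⟨B, hB, hAB⟩
  exact ⟨_, hm g hB, (hpmp g).quasiMeasurePreserving.preimage_ae_eq hAB⟩

lemma measurable_nat_of {X : Type*} {m : MeasurableSpace X} (b : X → ℕ)
    (h : ∀ n, MeasurableSet (b ⁻¹' {n})) : Measurable b :=
  measurable_to_countable' h

lemma measurable_nat_comp {X : Type*} {m : MeasurableSpace X} (b : X → ℕ)
    (h : Measurable b) (f : ℕ → ℕ) : Measurable (fun x => f (b x)) :=
  (measurable_of_countable f).comp h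

/-- the generation part -/
lemma generation {G X : Type*} (F : MeasurableSpace X) [Group G] [Countable G]
    [mX : MeasurableSpace X] [MulAction G X]
    (μ : Measure X) [IsProbabilityMeasure μ] (hpmp : IsPmp G μ)
    (hF : F ≤ mX) (hFinv : InvariantAlg G F)
    (C : ℕ → Set X)
    (hCi : ∀ j, ∀ g : G, (fun x => g • x) ⁻¹' (C j) = C j)
    (hCd : ∀ m : MeasurableSpace X, m ≤ mX → (∀ j, ∃ B, MeasurableSet[m] B ∧ C j =ᵐ[μ] B) →
        ∀ A, MeasurableSet[mX] A → (∀ g : G, (fun x => g • x) ⁻¹' A = A) →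
          ∃ B, MeasurableSet[m] B ∧ A =ᵐ[μ] B)
    (Mi : ℕ → Set X) (hMi : ∀ i, ∀ᵐ x ∂μ, ∃ g : G, g • x ∈ Mi i)
    (t : X → ℕ) (ht : Measurable t)
    (hte : ∀ i, {x | (t x).testBit i = true} =ᵐ[μ] (Mi i ∩ C i : Set X))
    (u : ℕ → G) (hu : Surjective u) {M : Set X} (hM : MeasurableSet M)
    (hMc : ∀ᵐ x ∂μ, ∃ g : G, g • x ∈ M)
    (a : X → ℕ) (ha : Measurable a) (q : ℕ → X → ℝ≥0∞)
    (hq : ∀ i, Measurable[F ⊔ invSigma G X] (q i)) (hqX : ∀ i, Measurable (q i))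
    (hq1 : ∀ x, ∑' i, q i x ≤ 1) (hfin : ∫⁻ x, psi (q (a x) x) ∂μ ≠ ⊤)
    (ξ : Set (Set X))
    (hξ : SubsetMod (sigmaG G (Set.range fun i => a ⁻¹' {i}) ⊔ F ⊔ invSigma G X) μ ξ) :
    SubsetMod (sigmaG G (Set.range fun n =>
      (fun x => Nat.pair (codeK u M a q x) (t x)) ⁻¹' {n}) ⊔ F) μ ξ := by
  have hm : ∀ g : G, Measurable fun x : X => g • x := fun g => (hpmp g).measurable
  have hK : Measurable (codeK u M a q) := measurable_codeK hm u hM a ha q hqX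
  have hb : Measurable fun x => Nat.pair (codeK u M a q x) (t x) :=
    (measurable_of_countable (fun p : ℕ × ℕ => Nat.pair p.1 p.2)).comp (hK.prodMk ht)
  set b : X → ℕ := fun x => Nat.pair (codeK u M a q x) (t x) with hbdef
  set S : Set (Set X) := Set.range fun n => b ⁻¹' {n} with hS
  have hle : sigmaG G S ⊔ F ≤ mX := by
    refine sup_le (sigmaG_le mX hm _ ?_) hF
    rintro _ ⟨n, rfl⟩
    exact hb (measurableSet_singleton n)
  have hNm := measurable_aeSpace (sigmaG G S ⊔ F) μ hpmp (invariant_sup S F hFinv)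
  have hNae : ∀ A B : Set X, MeasurableSet[aeSpace (sigmaG G S ⊔ F) μ] A → A =ᵐ[μ] B →
      MeasurableSet[aeSpace (sigmaG G S ⊔ F) μ] B := by
    rintro A B ⟨D, hD, hAD⟩ hAB
    exact ⟨D, hD, hAB.symm.trans hAD⟩
  have hbn : ∀ n, MeasurableSet[aeSpace (sigmaG G S ⊔ F) μ] (b ⁻¹' {n}) := by
    intro n
    refine le_aeSpace _ μ _ ((le_sup_left : sigmaG G S ≤ sigmaG G S ⊔ F) _ ?_)
    refine MeasurableSpace.measurableSet_generateFrom ⟨1, _, ⟨n, rfl⟩, ?_⟩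
    ext x
    simp
  have hbN := measurable_nat_of (m := aeSpace (sigmaG G S ⊔ F) μ) b hbn
  have hKN : Measurable[aeSpace (sigmaG G S ⊔ F) μ] (codeK u M a q) := by
    have := measurable_nat_comp (m := aeSpace (sigmaG G S ⊔ F) μ) b hbN (fun n => n.unpair.1)
    simpa [hbdef] using this
  have htN : Measurable[aeSpace (sigmaG G S ⊔ F) μ] t := by
    have := measurable_nat_comp (m := aeSpace (sigmaG G S ⊔ F) μ) b hbN (fun n => n.unpair.2)
    simpa [hbdef] using this
  have hEN : ∀ i, MeasurableSet[aeSpace (sigmaG G S ⊔ F) μ] (Mi i ∩ C i) := by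
    intro i
    refine hNae _ _ ?_ (hte i)
    exact htN (t := {n | n.testBit i = true}) trivial
  have hCN : ∀ j, MeasurableSet[aeSpace (sigmaG G S ⊔ F) μ] (C j) := by
    intro j
    refine hNae (⋃ g : G, (fun x => g • x) ⁻¹' (Mi j ∩ C j)) _ ?_ ?_
    · exact MeasurableSet.iUnion fun g => hNm g (hEN j)
    · filter_upwards [hMi j] with x hx
      apply propext
      change x ∈ (⋃ g : G, (fun x => g • x) ⁻¹' (Mi j ∩ C j)) ↔ x ∈ C j
      have hC : ∀ g : G, g • x ∈ C j ↔ x ∈ C j := fun g => by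
        conv_rhs => rw [← hCi j g]
        rfl
      simp only [mem_iUnion, mem_preimage, mem_inter_iff, hC]
      constructor
      · rintro ⟨g, _, h⟩; exact h
      · intro h; obtain ⟨g, hg⟩ := hx; exact ⟨g, hg, h⟩
  have hIN : invSigma G X ≤ aeSpace (sigmaG G S ⊔ F) μ := by
    refine MeasurableSpace.generateFrom_le ?_
    rintro A ⟨hA, hAi⟩
    exact hCd _ hle hCN A hA hAi
  have hFN : F ≤ aeSpace (sigmaG G S ⊔ F) μ := le_sup_right.trans (le_aeSpace _ μ)
  have hqN : ∀ i, Measurable[aeSpace (sigmaG G S ⊔ F) μ] (q i) := fun i =>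
    (hq i).mono (sup_le hFN hIN) le_rfl
  have hαN : ∀ i, MeasurableSet[aeSpace (sigmaG G S ⊔ F) μ] (a ⁻¹' {i}) :=
    decode _ μ hpmp u hu hM hMc a ha q hqX hq1 hfin hNm hNae hqN hKN
  have hall : sigmaG G (Set.range fun i => a ⁻¹' {i}) ⊔ F ⊔ invSigma G X ≤
      aeSpace (sigmaG G S ⊔ F) μ := by
    refine sup_le (sup_le (sigmaG_le _ hNm _ ?_) hFN) hIN
    rintro _ ⟨i, rfl⟩
    exact hαN i
  intro A hA
  obtain ⟨B, hB, hAB⟩ := hξ A hA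
  obtain ⟨D, hD, hBD⟩ := hall _ hB
  exact ⟨D, hD, measure_symmDiff_eq_zero_iff.2 ((measure_symmDiff_eq_zero_iff.1 hAB).trans hBD)⟩

lemma exists_index {X : Type*} [MeasurableSpace X] (α : ℕ → Set X) (hα : IsPartition α) :
    ∃ a : X → ℕ, Measurable a ∧ ∀ i, α i = a ⁻¹' {i} := by
  obtain ⟨hm, hd, hc⟩ := hα
  have hex : ∀ x, ∃ i, x ∈ α i := fun x => by
    have : x ∈ ⋃ i, α i := hc ▸ mem_univ x
    exact mem_iUnion.1 this
  choose a ha using hex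
  have key : ∀ i, α i = a ⁻¹' {i} := by
    intro i
    ext x
    constructor
    · intro hx
      by_contra hne
      exact (Set.disjoint_left.1 (hd (show a x ≠ i from hne))) (ha x) hx
    · rintro rfl
      exact ha x
  exact ⟨a, measurable_to_countable' fun i => key i ▸ hm i, key⟩

lemma isPartition_fibers {X : Type*} [MeasurableSpace X] (b : X → ℕ) (hb : Measurable b) :
    IsPartition fun n => b ⁻¹' {n} := by
  refine ⟨fun n => hb (measurableSet_singleton n), ?_, ?_⟩
  · intro i j hij
    refine Set.disjoint_left.2 fun x h1 h2 => hij ?_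
    exact (show b x = i from h1).symm.trans h2
  · ext x; simp

lemma invSigma_le (G X : Type*) [Group G] [MulAction G X] [mX : MeasurableSpace X] :
    invSigma G X ≤ mX := MeasurableSpace.generateFrom_le fun _ h => h.1

lemma hard_dir {G X : Type*} (F : MeasurableSpace X) [Group G] [Countable G]
    [mX : MeasurableSpace X] [StandardBorelSpace X] [MulAction G X]
    (μ : Measure X) [IsProbabilityMeasure μ] (hpmp : IsPmp G μ) (hap : Aperiodic G μ)
    (ξ : Set (Set X)) (hF : F ≤ mX) (hFinv : InvariantAlg G F)
    (α : ℕ → Set X) (hα : IsPartition α)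
    (hξ : SubsetMod (sigmaG G (Set.range α) ⊔ F ⊔ invSigma G X) μ ξ)
    (hfin : condEnt (F ⊔ invSigma G X) μ α ≠ ⊤) (e : ℝ) (he : 0 < e) :
    ∃ β : ℕ → Set X, IsPartition β ∧ SubsetMod (sigmaG G (Set.range β) ⊔ F) μ ξ ∧
      shEnt μ β ≤ condEnt (F ⊔ invSigma G X) μ α + ENNReal.ofReal (5 * e) := by
  have hm : ∀ g : G, Measurable fun x : X => g • x := fun g => (hpmp g).measurable
  have hmle : F ⊔ invSigma G X ≤ mX := sup_le hF (invSigma_le G X)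
  obtain ⟨a, ha, hαa⟩ := exists_index α hα
  obtain rfl : α = fun i => a ⁻¹' {i} := funext hαa
  obtain ⟨q, hq, hq1, hqe⟩ := exists_q (F ⊔ invSigma G X) hmle μ a ha
  have hqX : ∀ i, Measurable (q i) := fun i => (hq i).mono hmle le_rfl
  set h := condEnt (F ⊔ invSigma G X) μ (fun i => a ⁻¹' {i}) with hh
  have hη : 0 < e / (h.toReal + 1) := by positivity
  obtain ⟨w1, C1, hC1, h1, h1', hs1, h10, h1k⟩ := exists_weights e _ he hη
  obtain ⟨w2, C2, hC2, h2, h2', hs2, h20, h2k⟩ := exists_weights e 1 he one_pos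
  obtain ⟨M, hM, hMμ, hMc⟩ := exists_marker μ hpmp hap (ENNReal.ofReal (e / (C1 + 1)))
    (by rw [ne_eq, ENNReal.ofReal_eq_zero, not_le]; positivity)
  obtain ⟨δ, hδ, hδs⟩ := ENNReal.exists_pos_sum_of_countable' (ε := ENNReal.ofReal (e / (C2 + 2)))
    (by rw [ne_eq, ENNReal.ofReal_eq_zero, not_le]; positivity) ℕ
  have hmk : ∀ i : ℕ, ∃ Mi : Set X, MeasurableSet Mi ∧ μ Mi ≤ δ i / 2 ^ i ∧
      ∀ᵐ x ∂μ, ∃ g : G, g • x ∈ Mi := fun i => exists_marker μ hpmp hap _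
    (ENNReal.div_ne_zero.2 ⟨(hδ i).ne', by finiteness⟩)
  choose Mi hMim hMiμ hMic using hmk
  obtain ⟨C, hCm, hCi, hCd⟩ := exists_dense_inv G μ
  have hsum : ∑' i, 2 ^ i * μ (Mi i ∩ C i) ≤ ENNReal.ofReal (e / (C2 + 2)) := by
    refine le_trans (ENNReal.tsum_le_tsum fun i => ?_) hδs.le
    calc 2 ^ i * μ (Mi i ∩ C i) ≤ 2 ^ i * (δ i / 2 ^ i) := by
          gcongr; exact (measure_mono inter_subset_left).trans (hMiμ i)
      _ = δ i := ENNReal.mul_div_cancel (by simp) (by finiteness)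
  obtain ⟨t, ht, htint, hte⟩ := exists_bits μ (fun i => Mi i ∩ C i)
    (fun i => (hMim i).inter (hCm i)) (ne_top_of_le_ne_top ENNReal.ofReal_ne_top hsum)
  obtain ⟨u, hu⟩ := exists_surjective_nat G
  have hK : Measurable (codeK u M a q) := measurable_codeK hm u hM a ha q hqX
  have hb : Measurable fun x => Nat.pair (codeK u M a q x) (t x) :=
    (measurable_of_countable (fun p : ℕ × ℕ => Nat.pair p.1 p.2)).comp (hK.prodMk ht)
  refine ⟨_, isPartition_fibers _ hb, generation F μ hpmp hF hFinv C hCi hCd Mi hMic t ht hte u hu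
    hM hMc a ha q hq hqX hq1 (ne_top_of_le_ne_top hfin hqe) ξ hξ, ?_⟩
  refine (shEnt_pair_le μ (codeK u M a q) t hK ht M hM (fun x hx => by simp [codeK, preK, hx])
    e _ C1 C2 he hη w1 w2 hC1 h1 h1' hs1 h10 h1k hC2 h2 h2' hs2 h20 h2k).trans ?_
  have hKi := (lintegral_log_codeK μ hpmp u hM a ha q hqX hq1).trans hqe
  have hti := htint.trans hsum
  have hr : h = ENNReal.ofReal h.toReal := (ENNReal.ofReal_toReal hfin).symm
  have hr0 : 0 ≤ h.toReal := ENNReal.toReal_nonneg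
  calc _ ≤ ENNReal.ofReal e + ENNReal.ofReal e +
        (ENNReal.ofReal (1 + e / (h.toReal + 1)) * ENNReal.ofReal h.toReal) +
        ENNReal.ofReal C1 * ENNReal.ofReal (e / (C1 + 1)) +
        ENNReal.ofReal (C2 + 2) * ENNReal.ofReal (e / (C2 + 2)) := by
          rw [← hr]; gcongr
    _ = ENNReal.ofReal (e + e + (1 + e / (h.toReal + 1)) * h.toReal + C1 * (e / (C1 + 1)) +
        (C2 + 2) * (e / (C2 + 2))) := by
          rw [← ENNReal.ofReal_mul (by positivity), ← ENNReal.ofReal_mul (by positivity),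
            ← ENNReal.ofReal_mul (by positivity), ← ENNReal.ofReal_add (by positivity) (by positivity),
            ← ENNReal.ofReal_add (by positivity) (by positivity),
            ← ENNReal.ofReal_add (by positivity) (by positivity),
            ← ENNReal.ofReal_add (by positivity) (by positivity)]
    _ ≤ ENNReal.ofReal (h.toReal + 5 * e) := by
          apply ENNReal.ofReal_le_ofReal
          have e1 : e / (h.toReal + 1) * h.toReal ≤ e := by
            rw [div_mul_eq_mul_div, div_le_iff₀ (by positivity)]; nlinarith
          have e2 : C1 * (e / (C1 + 1)) ≤ e := by
            rw [mul_div_assoc', div_le_iff₀ (by positivity)]; nlinarith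
          have e3 : (C2 + 2) * (e / (C2 + 2)) = e := by field_simp
          rw [e3, add_mul, one_mul]
          linarith
    _ = h + ENNReal.ofReal (5 * e) := by
          rw [ENNReal.ofReal_add hr0 (by positivity), ← hr]

/-- Corollary 4.8: for aperiodic actions, the outer Rokhlin entropy is
the infimum of the (unconditioned) Shannon entropies of partitions generating `ξ` over
`F` without the help of the invariant σ-algebra. -/
theorem statement9 {G X : Type*} (F : MeasurableSpace X) [Group G] [Countable G]
    [mX : MeasurableSpace X] [StandardBorelSpace X] [MulAction G X]
    (μ : Measure X) [IsProbabilityMeasure μ] (hpmp : IsPmp G μ) (hap : Aperiodic G μ)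
    (ξ : Set (Set X)) (hξm : ∀ A ∈ ξ, MeasurableSet A)
    (hF : F ≤ mX) (hFinv : InvariantAlg G F) :
    outerRokhlin G ξ F μ =
      sInf { h | ∃ α : ℕ → Set X, IsPartition α ∧
        SubsetMod (sigmaG G (Set.range α) ⊔ F) μ ξ ∧ h = shEnt μ α } := by
  apply le_antisymm
  · refine le_sInf ?_
    rintro _ ⟨β, hβ, hβξ, rfl⟩
    refine le_trans (sInf_le ⟨β, hβ, ?_, rfl⟩)
      (condEnt_le_shEnt _ (sup_le hF (invSigma_le G X)) μ β hβ.1)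
    intro A hA
    obtain ⟨B, hB, hAB⟩ := hβξ A hA
    exact ⟨B, (le_sup_left : sigmaG G (Set.range β) ⊔ F ≤
      sigmaG G (Set.range β) ⊔ F ⊔ invSigma G X) _ hB, hAB⟩
  · refine le_sInf ?_
    rintro _ ⟨α, hα, hαξ, rfl⟩
    by_cases hfin : condEnt (F ⊔ invSigma G X) μ α = ⊤
    · rw [hfin]; exact le_top
    refine ENNReal.le_of_forall_pos_le_add fun ε hε _ => ?_
    obtain ⟨β, hβ, hβξ, hle⟩ := hard_dir F μ hpmp hap ξ hF hFinv α hα hαξ hfin (ε / 5)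
      (by positivity)
    refine le_trans (sInf_le ⟨β, hβ, hβξ, rfl⟩) (hle.trans (le_of_eq ?_))
    congr 1
    rw [mul_div_cancel₀ _ (by norm_num)]
    exact ENNReal.ofReal_coe_nnreal
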